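/- Let d ≥ 1, a ≥ 0 and 2 ≤ r ≤ ∞. There exists C = C(d,a,r) > 0 such that for every t ≠ 0 and every F ∈ 𝒮(ℝ^{d+1}_+), the function 𝕊_a(t)F(X) := ∫_{ℝ^{d+1}_+} 𝕊_a(X,Y,t) F(Y) dω_a(Y) satisfies the dispersive estimate ‖𝕊_a(t)F‖_{L^r_a(ℝ^{d+1}_+)} ≤ C · |t|^{−(d+a+1)(1/2 − 1/r)} · ‖F‖_{L^{r'}_a(ℝ^{d+1}_+)} (for r = ∞ the left-hand norm is the unweighted essential supremum). -/

import Mathlib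

open MeasureTheory Filter Complex
open scoped ENNReal NNReal Topology

noncomputable section

/-- Bessel function of the first kind of order `ν`, via its power series. -/
def besselJ (ν : ℝ) (x : ℝ) : ℝ :=
  ∑' k : ℕ, ((-1 : ℝ) ^ k / ((k.factorial : ℝ) * Real.Gamma ((k : ℝ) + ν + 1))) *
    (x / 2) ^ (2 * (k : ℝ) + ν)

/-- The half-line Schrödinger–Bessel kernel `S_a(z,ζ,t)`. -/
def SaK (a : ℝ) (z ζ t : ℝ) : ℂ :=
  (Complex.exp (-Complex.I * ((Real.sign t : ℝ) : ℂ) * (((a + 1) * Real.pi / 4 : ℝ) : ℂ)) /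
      (((2 * |t|) ^ ((a + 1) / 2) : ℝ) : ℂ)) *
    (((z * ζ / (2 * |t|)) ^ ((1 - a) / 2) : ℝ) : ℂ) *
    ((besselJ ((a - 1) / 2) (z * ζ / (2 * |t|)) : ℝ) : ℂ) *
    Complex.exp (Complex.I * ((z ^ 2 + ζ ^ 2 : ℝ) : ℂ) / ((4 * t : ℝ) : ℂ))

/-- The boundary kernel `S_a(z,0,t)`. -/
def Sa0 (a : ℝ) (z t : ℝ) : ℂ :=
  ((((2 : ℝ) ^ (-a) / Real.Gamma ((a + 1) / 2) : ℝ)) : ℂ) *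
    Complex.exp (-Complex.I * ((Real.sign t : ℝ) : ℂ) * (((a + 1) * Real.pi / 4 : ℝ) : ℂ)) *
    (((|t| ^ (-((a + 1) / 2)) : ℝ)) : ℂ) *
    Complex.exp (Complex.I * ((z ^ 2 : ℝ) : ℂ) / ((4 * t : ℝ) : ℂ))

/-- The free Schrödinger kernel on `ℝ^d` (principal branch of the power). -/
def Sfree (d : ℕ) (x y : Fin d → ℝ) (t : ℝ) : ℂ :=
  (4 * (Real.pi : ℂ) * Complex.I * (t : ℂ)) ^ (-(d : ℂ) / 2) *
    Complex.exp (Complex.I * ((∑ i, (x i - y i) ^ 2 : ℝ) : ℂ) / ((4 * t : ℝ) : ℂ))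

/-- The full half-space kernel `𝕊_a(X,Y,t) = S_a(z,ζ,t)·S(x,y,t)`. -/
def SK (d : ℕ) (a : ℝ) (X Y : (Fin d → ℝ) × ℝ) (t : ℝ) : ℂ :=
  SaK a X.2 Y.2 t * Sfree d X.1 Y.1 t

/-- The weighted measure `dω_a = z^a dx dz` on the half-space `ℝ^d × (0,∞)`. -/
def ωa (d : ℕ) (a : ℝ) : Measure ((Fin d → ℝ) × ℝ) :=
  (volume : Measure (Fin d → ℝ)).prod
    (((volume : Measure ℝ).restrict (Set.Ioi 0)).withDensity fun z => ENNReal.ofReal (z ^ a))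

/-- The mixed norm `‖Φ‖_{L^q_t L^r_x}`. -/
def mixNorm (d : ℕ) (q r : ℝ) (Φ : (Fin d → ℝ) → ℝ → ℂ) : ℝ≥0∞ :=
  (∫⁻ t : ℝ, (∫⁻ x : Fin d → ℝ, (‖Φ x t‖₊ : ℝ≥0∞) ^ r) ^ (q / r)) ^ (1 / q)

/-- The mixed norm `‖Φ‖_{L^q_T L^r_x}` over the time interval `[0,T]`. -/
def mixNormT (d : ℕ) (T q r : ℝ) (Φ : (Fin d → ℝ) → ℝ → ℂ) : ℝ≥0∞ :=
  (∫⁻ t in Set.Ioc (0 : ℝ) T, (∫⁻ x : Fin d → ℝ, (‖Φ x t‖₊ : ℝ≥0∞) ^ r) ^ (q / r)) ^ (1 / q)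

/-- The homogeneous propagator `𝕋_a^*(u₀)`. -/
def Tstar (d : ℕ) (a : ℝ) (u₀ : (Fin d → ℝ) × ℝ → ℂ) (X : (Fin d → ℝ) × ℝ) (t : ℝ) : ℂ :=
  if t = 0 then u₀ X else ∫ Y, SK d a X Y t * u₀ Y ∂(ωa d a)

/-- The inhomogeneous Duhamel term `𝔻_a(F)`. -/
def Dop (d : ℕ) (a : ℝ) (F : (Fin d → ℝ) × ℝ → ℝ → ℂ) (X : (Fin d → ℝ) × ℝ) (t : ℝ) : ℂ :=
  ∫ τ in (0 : ℝ)..t, ∫ Y, SK d a X Y (t - τ) * F Y τ ∂(ωa d a)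

/-- The boundary-data operator `Θ_a^*(Φ)`. -/
def ThetaStar (d : ℕ) (a : ℝ) (Φ : (Fin d → ℝ) → ℝ → ℂ) (X : (Fin d → ℝ) × ℝ) (t : ℝ) : ℂ :=
  Complex.I *
    ∫ τ in (0 : ℝ)..t, ∫ y : Fin d → ℝ, Sa0 a X.2 (t - τ) * Sfree d X.1 y (t - τ) * Φ y τ

/-- The weight `k(z) = min{1, z^{a/2}}`. -/
def kwt (a z : ℝ) : ℝ := min 1 (z ^ (a / 2))

/-- The weight `k^{-1}(z) = max{1, z^{-a/2}}`. -/
def kinv (a z : ℝ) : ℝ := max 1 (z ^ (-a / 2))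

/-!
Up to a factor of modulus one and the quadratic phases `e^{i|X|²/4t}` and `e^{i|Y|²/4t}`, the kernel
`𝕊_a(·, ·, t)` is the product of the Fourier kernel in `x` and the Hankel kernel of order
`ν = (a - 1) / 2` in `z`. For `a ≥ 0` the function `J_ν(w) / w^ν` is bounded, by a Lyapunov function
for Bessel's equation, so the kernel is bounded by a multiple of `|t|^{-(d + a + 1) / 2}`; this is
the `L¹ → L^∞` estimate. For `L² → L²` no Plancherel theorem is needed: inserting a Gaussian cut-off
into `T*T` turns the Gram kernel into a heat kernel (in `z` this is Weber's second exponential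
integral), whose mass is at most one, so `T` is a contraction by Schur's test and Fatou's lemma.
Marcinkiewicz interpolation between the two bounds gives `2 < r < ∞`.
-/

open scoped Nat ComplexConjugate

section BesselClifford

/-- The `k`-th coefficient of the Bessel–Clifford function of order `ν`. -/
def besselCliffordCoeff (ν : ℝ) (k : ℕ) : ℝ := 1 / (k ! * Real.Gamma (k + ν + 1))

/-- The Bessel–Clifford function `C_ν`, the entire function with
`J_ν(x) = (x / 2) ^ ν * C_ν (-x ^ 2 / 4)`. Unlike `J_ν` it needs no real power of `x`. -/
def besselClifford (ν x : ℝ) : ℝ := ∑' k : ℕ, besselCliffordCoeff ν k * x ^ k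

variable {ν : ℝ}

lemma gamma_natCast_add_add_one_pos (hν : -1 < ν) (k : ℕ) : 0 < Real.Gamma (k + ν + 1) :=
  Real.Gamma_pos_of_pos (by linarith [k.cast_nonneg (α := ℝ)])

lemma besselCliffordCoeff_pos (hν : -1 < ν) (k : ℕ) : 0 < besselCliffordCoeff ν k := by
  have := gamma_natCast_add_add_one_pos hν k
  unfold besselCliffordCoeff
  positivity

lemma add_one_mul_besselCliffordCoeff_succ (ν : ℝ) (k : ℕ) :
    (k + 1) * besselCliffordCoeff ν (k + 1) = besselCliffordCoeff (ν + 1) k := by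
  have hk : (k + 1 : ℝ) ≠ 0 := by positivity
  have hshift : ((k + 1 : ℕ) : ℝ) + ν + 1 = k + (ν + 1) + 1 := by push_cast; ring
  unfold besselCliffordCoeff
  rw [hshift, Nat.factorial_succ]
  push_cast
  rw [mul_assoc, one_div, one_div, mul_inv, mul_inv_cancel_left₀ hk]

lemma besselCliffordCoeff_eq_mul (hν : -1 < ν) (k : ℕ) :
    besselCliffordCoeff ν k = (k + ν + 1) * besselCliffordCoeff (ν + 1) k := by
  have hk : (k : ℝ) + ν + 1 ≠ 0 := by linarith [k.cast_nonneg (α := ℝ)]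
  unfold besselCliffordCoeff
  rw [← add_assoc (k : ℝ) ν 1, Real.Gamma_add_one hk]
  have := (gamma_natCast_add_add_one_pos hν k).ne'
  field_simp

lemma summable_besselClifford (ν x : ℝ) :
    Summable fun k : ℕ ↦ besselCliffordCoeff ν k * x ^ k := by
  refine .of_norm_bounded_eventually_nat (Real.summable_pow_div_factorial |x|) ?_
  obtain ⟨N, hN⟩ := exists_nat_ge (1 - ν)
  filter_upwards [eventually_ge_atTop N] with k hk
  have hkν : 2 ≤ k + ν + 1 := by linarith [(Nat.cast_le (α := ℝ)).2 hk]
  have hΓ : 1 ≤ Real.Gamma (k + ν + 1) := by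
    simpa using Real.Gamma_strictMonoOn_Ici.monotoneOn Set.self_mem_Ici hkν hkν
  have hcoeff : |besselCliffordCoeff ν k| ≤ 1 / k ! := by
    rw [besselCliffordCoeff, abs_of_nonneg (by have := zero_lt_one.trans_le hΓ; positivity)]
    gcongr
    exact le_mul_of_one_le_right (by positivity) hΓ
  calc ‖besselCliffordCoeff ν k * x ^ k‖ = |x| ^ k * |besselCliffordCoeff ν k| := by
        rw [norm_mul, norm_pow, mul_comm, Real.norm_eq_abs, Real.norm_eq_abs]
    _ ≤ |x| ^ k * (1 / k !) := by gcongr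
    _ = |x| ^ k / k ! := mul_one_div _ _

lemma hasSum_besselClifford (ν x : ℝ) :
    HasSum (fun k : ℕ ↦ besselCliffordCoeff ν k * x ^ k) (besselClifford ν x) :=
  (summable_besselClifford ν x).hasSum

lemma besselClifford_zero (ν : ℝ) : besselClifford ν 0 = 1 / Real.Gamma (ν + 1) := by
  rw [besselClifford, tsum_eq_single 0 fun k hk ↦ by simp [hk]]
  simp [besselCliffordCoeff]

lemma besselClifford_nonneg (hν : -1 < ν) {x : ℝ} (hx : 0 ≤ x) : 0 ≤ besselClifford ν x :=
  tsum_nonneg fun k ↦ mul_nonneg (besselCliffordCoeff_pos hν k).le (pow_nonneg hx k)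

lemma hasSum_natCast_mul_besselClifford (ν x : ℝ) :
    HasSum (fun k : ℕ ↦ k * besselCliffordCoeff ν k * x ^ (k - 1)) (besselClifford (ν + 1) x) := by
  rw [← hasSum_nat_add_iff' 1]
  simpa [add_one_mul_besselCliffordCoeff_succ] using hasSum_besselClifford (ν + 1) x

lemma besselClifford_eq_add (hν : -1 < ν) (x : ℝ) :
    besselClifford ν x =
      (ν + 1) * besselClifford (ν + 1) x + x * besselClifford (ν + 1 + 1) x := by
  refine (hasSum_besselClifford ν x).unique ?_
  refine (((hasSum_besselClifford (ν + 1) x).mul_left (ν + 1)).add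
    ((hasSum_natCast_mul_besselClifford (ν + 1) x).mul_left x)).congr_fun fun k ↦ ?_
  rw [besselCliffordCoeff_eq_mul hν]
  cases k with
  | zero => simp
  | succ k => simp only [Nat.add_sub_cancel, pow_succ]; ring

lemma hasDerivAt_besselClifford (ν x : ℝ) :
    HasDerivAt (besselClifford ν) (besselClifford (ν + 1) x) x := by
  rw [← (hasSum_natCast_mul_besselClifford ν x).tsum_eq]
  set R : ℝ := |x| + 1
  have hR : 0 < R := by positivity
  refine hasDerivAt_tsum_of_isPreconnected (t := Metric.ball 0 R) (y₀ := 0)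
    (g := fun k y ↦ besselCliffordCoeff ν k * y ^ k)
    (g' := fun k y ↦ k * besselCliffordCoeff ν k * y ^ (k - 1))
    (hasSum_natCast_mul_besselClifford ν R).summable.abs Metric.isOpen_ball
    (convex_ball _ _).isPreconnected (fun k y _ ↦ ?_) (fun k y hy ↦ ?_)
    (Metric.mem_ball_self hR) (summable_besselClifford ν 0) (by simp [R])
  · exact ((hasDerivAt_pow k y).const_mul (besselCliffordCoeff ν k)).congr_deriv (by ring)
  · have hyR : |y| ≤ R := by simpa using (Metric.mem_ball.mp hy).le
    rw [Real.norm_eq_abs, abs_mul, abs_mul (_ * _), abs_pow, abs_pow, abs_of_pos hR]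
    gcongr

lemma continuous_besselClifford (ν : ℝ) : Continuous (besselClifford ν) :=
  continuous_iff_continuousAt.2 fun x ↦ (hasDerivAt_besselClifford ν x).continuousAt

/-- The Lyapunov function `C_ν(-w) ^ 2 + w * C_{ν+1}(-w) ^ 2` has derivative
`-(2 * ν + 1) * C_{ν+1}(-w) ^ 2`. -/
lemma abs_besselClifford_neg_le (hν : -1 / 2 ≤ ν) {w : ℝ} (hw : 0 ≤ w) :
    |besselClifford ν (-w)| ≤ 1 / Real.Gamma (ν + 1) := by
  have hderiv_neg (μ w : ℝ) : HasDerivAt (fun w ↦ besselClifford μ (-w))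
      (-besselClifford (μ + 1) (-w)) w := by
    simpa [Function.comp_def] using (hasDerivAt_besselClifford μ (-w)).comp w (hasDerivAt_neg w)
  have hderiv (w : ℝ) :
      HasDerivAt (fun w ↦ besselClifford ν (-w) ^ 2 + w * besselClifford (ν + 1) (-w) ^ 2)
        (-(2 * ν + 1) * besselClifford (ν + 1) (-w) ^ 2) w := by
    refine (((hderiv_neg ν w).fun_pow 2).fun_add
      ((hasDerivAt_id' w).fun_mul ((hderiv_neg (ν + 1) w).fun_pow 2))).congr_deriv ?_
    rw [besselClifford_eq_add (by linarith)]
    push_cast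
    ring
  have hanti := antitone_of_hasDerivAt_nonpos hderiv
    fun w ↦ mul_nonpos_of_nonpos_of_nonneg (by linarith) (sq_nonneg _)
  have hle := hanti hw
  simp only [neg_zero, zero_mul, add_zero, besselClifford_zero] at hle
  have hΓ := Real.Gamma_pos_of_pos (by linarith : 0 < ν + 1)
  exact abs_le_of_sq_le_sq (by linarith [mul_nonneg hw (sq_nonneg (besselClifford (ν + 1) (-w)))])
    (by positivity)

end BesselClifford

section DoubleSeries

lemma choose_natCast_add {ν : ℝ} (hν : -1 < ν) (n : ℕ) :
    Ring.choose ((n : ℝ) + ν) n = Real.Gamma (n + ν + 1) / (n ! * Real.Gamma (ν + 1)) := by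
  have hΓ := (Real.Gamma_pos_of_pos (by linarith : 0 < ν + 1)).ne'
  induction n with
  | zero => simp [hΓ]
  | succ n ih =>
    have hn : (n : ℝ) + ν + 1 ≠ 0 := by linarith [n.cast_nonneg (α := ℝ)]
    have hrec := Ring.choose_add_smul_choose ((n : ℝ) + ν) n 1
    rw [Nat.choose_one_right, Nat.cast_one, Ring.choose_one_right, ih, nsmul_eq_mul] at hrec
    have hshift : ((n + 1 : ℕ) : ℝ) + ν = n + ν + 1 := by push_cast; ring
    rw [hshift, Real.Gamma_add_one hn, Nat.factorial_succ]
    push_cast at hrec ⊢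
    field_simp at hrec ⊢
    exact hrec

/-- This is the Chu–Vandermonde identity for `binom (k + (j + ν)) k`, written symmetrically in
`j` and `k` because the summands vanish for `m > min j k`. -/
lemma gamma_mul_besselCliffordCoeff_mul {ν : ℝ} (hν : -1 < ν) (j k : ℕ) :
    Real.Gamma (j + k + ν + 1) * besselCliffordCoeff ν j * besselCliffordCoeff ν k =
      ∑ m ∈ Finset.range (k + 1),
        besselCliffordCoeff ν m * (j.descFactorial m / j !) * (k.descFactorial m / k !) := by
  have hj := (gamma_natCast_add_add_one_pos hν j).ne'
  have hk := (gamma_natCast_add_add_one_pos hν k).ne'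
  have hchoose := Ring.add_choose_eq k (Commute.all (j : ℝ) (k + ν))
  rw [show (j : ℝ) + (k + ν) = k + (j + ν) by ring,
    choose_natCast_add (by linarith [j.cast_nonneg (α := ℝ)]),
    Finset.Nat.sum_antidiagonal_eq_sum_range_succ_mk] at hchoose
  calc Real.Gamma (j + k + ν + 1) * besselCliffordCoeff ν j * besselCliffordCoeff ν k
      = Real.Gamma (k + (j + ν) + 1) / (k ! * Real.Gamma (j + ν + 1)) *
          (1 / (j ! * Real.Gamma (k + ν + 1))) := by
        unfold besselCliffordCoeff
        rw [show (j : ℝ) + k + ν + 1 = k + (j + ν) + 1 by ring]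
        field_simp
    _ = _ := by
        rw [hchoose, Finset.sum_mul]
        refine Finset.sum_congr rfl fun m hm ↦ ?_
        obtain ⟨l, rfl⟩ := Nat.exists_eq_add_of_le' (Finset.mem_range_succ_iff.1 hm)
        have hm := (gamma_natCast_add_add_one_pos hν m).ne'
        have hdesc := Nat.factorial_mul_descFactorial (Nat.le_add_left m l)
        rw [Nat.add_sub_cancel] at hdesc ⊢
        have hl : (l : ℝ) + (m + ν) = (l + m : ℕ) + ν := by push_cast; ring
        rw [← hl, choose_natCast_add (by linarith [m.cast_nonneg (α := ℝ)]),
          Ring.choose_natCast, Nat.descFactorial_eq_factorial_mul_choose j, ← hdesc, hl]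
        have hdesc_ne : ((l + m).descFactorial m : ℝ) ≠ 0 := by
          rw [Nat.cast_ne_zero]; simp [Nat.descFactorial_eq_zero_iff_lt]
        unfold besselCliffordCoeff
        push_cast at hk ⊢
        field_simp

lemma hasSum_pow_mul_descFactorial_div (x : ℝ) (m : ℕ) :
    HasSum (fun j : ℕ ↦ x ^ j * (j.descFactorial m / j !)) (x ^ m * Real.exp x) := by
  have hzero : ∑ i ∈ Finset.range m, x ^ i * (i.descFactorial m / i ! : ℝ) = 0 :=
    Finset.sum_eq_zero fun i hi ↦ by
      simp [Nat.descFactorial_eq_zero_iff_lt.2 (Finset.mem_range.1 hi)]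
  rw [← hasSum_nat_add_iff' m, hzero, sub_zero, Real.exp_eq_exp_ℝ]
  refine ((NormedSpace.expSeries_div_hasSum_exp x).mul_left (x ^ m)).congr_fun fun j ↦ ?_
  have hdesc := Nat.factorial_mul_descFactorial (Nat.le_add_left m j)
  rw [Nat.add_sub_cancel] at hdesc
  have hpos : ((j + m).descFactorial m : ℝ) ≠ 0 := by
    exact_mod_cast (Nat.pos_of_ne_zero (by simp [Nat.descFactorial_eq_zero_iff_lt])).ne'
  rw [← hdesc]
  push_cast
  field_simp
  ring

lemma hasSum_prod_descFactorial (x y c : ℝ) (m : ℕ) :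
    HasSum (fun p : ℕ × ℕ ↦ c * (x ^ p.1 * (p.1.descFactorial m / p.1 !)) *
      (y ^ p.2 * (p.2.descFactorial m / p.2 !))) (Real.exp (x + y) * (c * (x * y) ^ m)) := by
  have hx := (hasSum_pow_mul_descFactorial_div x m).mul_left c
  have hy := hasSum_pow_mul_descFactorial_div y m
  have hprod : Real.exp (x + y) * (c * (x * y) ^ m) =
      c * (x ^ m * Real.exp x) * (y ^ m * Real.exp y) := by
    rw [Real.exp_add, mul_pow]; ring
  rw [hprod]
  have hsummable := summable_mul_of_summable_norm hx.summable.norm hy.summable.norm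
  exact hx.mul hy hsummable

lemma hasSum_gamma_mul_besselCliffordCoeff_mul {ν : ℝ} (hν : -1 < ν) (x y : ℝ) :
    HasSum (fun p : ℕ × ℕ ↦ Real.Gamma (p.1 + p.2 + ν + 1) *
        (besselCliffordCoeff ν p.1 * x ^ p.1) * (besselCliffordCoeff ν p.2 * y ^ p.2))
      (Real.exp (x + y) * besselClifford ν (x * y)) := by
  let F (x y : ℝ) (q : ℕ × (ℕ × ℕ)) : ℝ :=
    besselCliffordCoeff ν q.1 * (x ^ q.2.1 * (q.2.1.descFactorial q.1 / q.2.1 !)) *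
      (y ^ q.2.2 * (q.2.2.descFactorial q.1 / q.2.2 !))
  have hrow (x y : ℝ) (m : ℕ) : HasSum (fun p ↦ F x y (m, p))
      (Real.exp (x + y) * (besselCliffordCoeff ν m * (x * y) ^ m)) :=
    hasSum_prod_descFactorial x y (besselCliffordCoeff ν m) m
  have hF_abs (q) : |F x y q| = F |x| |y| q := by
    simp [F, abs_mul, abs_div, abs_of_pos (besselCliffordCoeff_pos hν q.1)]
  have hF_summable : Summable (F x y) := by
    refine Summable.of_abs ?_
    simp only [hF_abs]
    refine (summable_prod_of_nonneg fun q ↦ hF_abs q ▸ abs_nonneg _).2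
      ⟨fun m ↦ (hrow |x| |y| m).summable, ?_⟩
    simp only [(hrow |x| |y| _).tsum_eq]
    exact (summable_besselClifford ν _).mul_left _
  have hF_sum : HasSum (F x y) (Real.exp (x + y) * besselClifford ν (x * y)) := by
    have htsum := hF_summable.hasSum.prod_fiberwise (hrow x y)
    rw [← htsum.unique ((hasSum_besselClifford ν (x * y)).mul_left (Real.exp (x + y)))]
    exact hF_summable.hasSum
  refine ((Equiv.prodComm _ _).hasSum_iff.2 hF_sum).prod_fiberwise fun p ↦ ?_
  have hcolumn : ∑ m ∈ Finset.range (p.2 + 1), F x y (m, p) = Real.Gamma (p.1 + p.2 + ν + 1) *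
      (besselCliffordCoeff ν p.1 * x ^ p.1) * (besselCliffordCoeff ν p.2 * y ^ p.2) := by
    calc _ = (∑ m ∈ Finset.range (p.2 + 1), besselCliffordCoeff ν m *
          (p.1.descFactorial m / p.1 !) * (p.2.descFactorial m / p.2 !)) *
            (x ^ p.1 * y ^ p.2) := by
          rw [Finset.sum_mul]
          refine Finset.sum_congr rfl fun m _ ↦ ?_
          simp only [F]
          ring
      _ = _ := by rw [← gamma_mul_besselCliffordCoeff_mul hν]; ring
  rw [← hcolumn]
  refine hasSum_sum_of_ne_finset_zero fun m hm ↦ ?_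
  have hdesc : p.2.descFactorial m = 0 :=
    Nat.descFactorial_eq_zero_iff_lt.2 (by simpa using hm)
  simp [F, hdesc]

end DoubleSeries

section Weber

variable {ν ε : ℝ}

lemma integral_rpow_mul_exp_neg_mul_sq_mul_pow (hν : -1 < ν) (hε : 0 < ε) (n : ℕ) :
    ∫ z in Set.Ioi (0 : ℝ), z ^ (2 * ν + 1) * Real.exp (-ε * z ^ 2) * (z ^ 2) ^ n =
      1 / 2 * ε ^ (-(ν + 1)) * (Real.Gamma (n + ν + 1) / ε ^ n) := by
  have hmoment := _root_.integral_rpow_mul_exp_neg_mul_rpow (p := 2) (q := 2 * ν + 1 + 2 * n)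
    (b := ε) (by norm_num) (by linarith [n.cast_nonneg (α := ℝ)]) hε
  rw [show (2 * ν + 1 + 2 * n + 1) / 2 = n + ν + 1 by ring,
    show -(2 * ν + 1 + 2 * n + 1) / 2 = -(ν + 1) - n by ring, Real.rpow_sub_natCast hε.ne']
    at hmoment
  rw [show 1 / 2 * ε ^ (-(ν + 1)) * (Real.Gamma (n + ν + 1) / ε ^ n) =
    ε ^ (-(ν + 1)) / ε ^ n * (1 / 2) * Real.Gamma (n + ν + 1) by ring, ← hmoment]
  refine setIntegral_congr_fun measurableSet_Ioi fun z (hz : 0 < z) ↦ ?_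
  rw [Real.rpow_add hz (2 * ν + 1), Real.rpow_mul hz.le 2 n, Real.rpow_natCast, Real.rpow_two]
  ring

lemma integrableOn_rpow_mul_exp_neg_mul_sq_mul_pow (hν : -1 < ν) (hε : 0 < ε) (n : ℕ) :
    IntegrableOn (fun z : ℝ ↦ z ^ (2 * ν + 1) * Real.exp (-ε * z ^ 2) * (z ^ 2) ^ n)
      (Set.Ioi 0) := by
  refine .of_integral_ne_zero ?_
  rw [integral_rpow_mul_exp_neg_mul_sq_mul_pow hν hε n]
  have := gamma_natCast_add_add_one_pos hν n
  positivity

lemma hasSum_besselClifford_mul (ν x y : ℝ) :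
    HasSum (fun p : ℕ × ℕ ↦ besselCliffordCoeff ν p.1 * x ^ p.1 *
      (besselCliffordCoeff ν p.2 * y ^ p.2)) (besselClifford ν x * besselClifford ν y) := by
  have hx := summable_besselClifford ν x
  have hy := summable_besselClifford ν y
  have hxy := summable_mul_of_summable_norm hx.norm hy.norm
  exact hx.hasSum.mul hy.hasSum hxy

/-- Weber's second exponential integral. -/
lemma integral_rpow_mul_exp_mul_besselClifford_mul_besselClifford
    (hν : -1 < ν) (hε : 0 < ε) (x y : ℝ) :
    ∫ z in Set.Ioi (0 : ℝ), z ^ (2 * ν + 1) * Real.exp (-ε * z ^ 2) *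
        (besselClifford ν (x * z ^ 2) * besselClifford ν (y * z ^ 2)) =
      1 / 2 * ε ^ (-(ν + 1)) * Real.exp ((x + y) / ε) * besselClifford ν (x * y / ε ^ 2) := by
  let F (x y : ℝ) (p : ℕ × ℕ) (z : ℝ) : ℝ :=
    besselCliffordCoeff ν p.1 * x ^ p.1 * (besselCliffordCoeff ν p.2 * y ^ p.2) *
      (z ^ (2 * ν + 1) * Real.exp (-ε * z ^ 2) * (z ^ 2) ^ (p.1 + p.2))
  have hF_int (x y) (p) : IntegrableOn (F x y p) (Set.Ioi 0) :=
    (integrableOn_rpow_mul_exp_neg_mul_sq_mul_pow hν hε (p.1 + p.2)).const_mul _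
  have hF_integral (x y) (p) : ∫ z in Set.Ioi 0, F x y p z =
      1 / 2 * ε ^ (-(ν + 1)) * (Real.Gamma (p.1 + p.2 + ν + 1) *
        (besselCliffordCoeff ν p.1 * (x / ε) ^ p.1) *
        (besselCliffordCoeff ν p.2 * (y / ε) ^ p.2)) := by
    rw [integral_const_mul, integral_rpow_mul_exp_neg_mul_sq_mul_pow hν hε]
    push_cast
    rw [pow_add, div_pow, div_pow]
    ring
  have hF_norm (p) : ∫ z in Set.Ioi 0, ‖F x y p z‖ = ∫ z in Set.Ioi 0, F |x| |y| p z := by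
    refine setIntegral_congr_fun measurableSet_Ioi fun z (hz : 0 < z) ↦ ?_
    have hcoeff (k) : |besselCliffordCoeff ν k| = besselCliffordCoeff ν k :=
      abs_of_pos (besselCliffordCoeff_pos hν k)
    simp [F, hcoeff, abs_of_pos hz, abs_of_pos (Real.rpow_pos_of_pos hz _)]
  have hF_sum (x y : ℝ) : HasSum (fun p ↦ ∫ z in Set.Ioi 0, F x y p z)
      (1 / 2 * ε ^ (-(ν + 1)) * (Real.exp (x / ε + y / ε) * besselClifford ν (x / ε * (y / ε)))) :=
    ((hasSum_gamma_mul_besselCliffordCoeff_mul hν (x / ε) (y / ε)).mul_left _).congr_fun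
      (hF_integral x y)
  have hF_swap := hasSum_integral_of_summable_integral_norm (hF_int x y)
    (by simpa only [hF_norm] using (hF_sum |x| |y|).summable)
  have hF_tsum (z : ℝ) : ∑' p, F x y p z = z ^ (2 * ν + 1) * Real.exp (-ε * z ^ 2) *
      (besselClifford ν (x * z ^ 2) * besselClifford ν (y * z ^ 2)) := by
    refine (((hasSum_besselClifford_mul ν (x * z ^ 2) (y * z ^ 2)).mul_left _).congr_fun
      fun p ↦ ?_).tsum_eq
    simp only [F, mul_pow, pow_add]
    ring
  simp only [hF_tsum] at hF_swap
  rw [← (hF_sum x y).unique hF_swap, add_div, div_mul_div_comm, sq, mul_assoc (1 / 2 * _)]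

lemma integral_rpow_mul_exp_mul_besselClifford (hν : -1 < ν) (hε : 0 < ε) (x : ℝ) :
    ∫ z in Set.Ioi (0 : ℝ), z ^ (2 * ν + 1) * Real.exp (-ε * z ^ 2) *
        besselClifford ν (x * z ^ 2) =
      1 / 2 * ε ^ (-(ν + 1)) * Real.exp (x / ε) := by
  have hzero : besselClifford ν 0 ≠ 0 := by
    have := Real.Gamma_pos_of_pos (by linarith : 0 < ν + 1)
    rw [besselClifford_zero]
    positivity
  have hweber := integral_rpow_mul_exp_mul_besselClifford_mul_besselClifford hν hε x 0
  simp only [zero_mul, mul_zero, zero_div, add_zero, ← mul_assoc, integral_mul_const] at hweber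
  exact mul_right_cancel₀ hzero hweber

end Weber

section KernelOperator

variable {α β : Type*}

section Gram

variable [MeasurableSpace α] {μ : Measure α} {k : α → β → ℂ} {g : α → ℝ}

/-- The kernel of `T* g T`, up to complex conjugation, for the integral operator `T` with
kernel `k` and the multiplication operator by `g`. -/
def gramKernel (μ : Measure α) (g : α → ℝ) (k : α → β → ℂ) (y y' : β) : ℂ :=
  ∫ x, (g x : ℂ) * (k x y * conj (k x y')) ∂μ

lemma gramKernel_conj_symm (y y' : β) :
    conj (gramKernel μ g k y' y) = gramKernel μ g k y y' := by
  simp only [gramKernel, ← integral_conj, map_mul, conj_ofReal, conj_conj, mul_comm (conj _)]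

lemma enorm_gramKernel_comm (y y' : β) : ‖gramKernel μ g k y' y‖ₑ = ‖gramKernel μ g k y y'‖ₑ := by
  rw [← gramKernel_conj_symm y y', RCLike.enorm_conj]

lemma gramKernel_unimodular_mul {u : α → ℂ} (v : β → ℂ) (hu : ∀ x, ‖u x‖ = 1) (y y' : β) :
    gramKernel μ g (fun x y ↦ u x * v y * k x y) y y' =
      v y * conj (v y') * gramKernel μ g k y y' := by
  rw [gramKernel, gramKernel, ← integral_const_mul]
  refine integral_congr_ae (ae_of_all _ fun x ↦ ?_)
  have hux : u x * conj (u x) = 1 := by rw [mul_conj', hu]; simp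
  simp only [map_mul]
  linear_combination (g x * v y * conj (v y') * (k x y * conj (k x y')) : ℂ) * hux

lemma gramKernel_prod [SFinite μ] {α' β' : Type*} [MeasurableSpace α'] {μ' : Measure α'}
    [SFinite μ'] {k' : α' → β' → ℂ} {g' : α' → ℝ} (Y Y' : β × β') :
    gramKernel (μ.prod μ') (fun X ↦ g X.1 * g' X.2) (fun X Y ↦ k X.1 Y.1 * k' X.2 Y.2) Y Y' =
      gramKernel μ g k Y.1 Y'.1 * gramKernel μ' g' k' Y.2 Y'.2 := by
  rw [gramKernel, gramKernel, gramKernel, ← integral_prod_mul]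
  refine integral_congr_ae (ae_of_all _ fun X ↦ ?_)
  simp only [map_mul, ofReal_mul]
  ring

end Gram

variable [MeasurableSpace β] {ν : Measure β} {k : α → β → ℂ} {f : β → ℂ} {g : α → ℝ} {B : ℝ}

/-- The integral operator with kernel `k`, taking functions on `β` to functions on `α`. -/
def kernelOperator (ν : Measure β) (k : α → β → ℂ) (f : β → ℂ) (x : α) : ℂ :=
  ∫ y, k x y * f y ∂ν

lemma enorm_kernelOperator_le (hB : ∀ x y, ‖k x y‖ ≤ B) (f : β → ℂ) (x : α) :
    ‖kernelOperator ν k f x‖ₑ ≤ ENNReal.ofReal B * eLpNorm f 1 ν := by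
  rw [eLpNorm_one_eq_lintegral_enorm, ← lintegral_const_mul' _ _ ENNReal.ofReal_ne_top]
  refine (enorm_integral_le_lintegral_enorm _).trans (lintegral_mono fun y ↦ ?_)
  rw [enorm_mul, ← ofReal_norm (k x y)]
  gcongr
  exact hB x y

lemma ofReal_mul_norm_kernelOperator_sq [SFinite ν] (x : α) :
    ((g x * ‖kernelOperator ν k f x‖ ^ 2 : ℝ) : ℂ) = ∫ p : β × β,
      (g x : ℂ) * (k x p.1 * conj (k x p.2)) * (f p.1 * conj (f p.2)) ∂ν.prod ν := by
  rw [ofReal_mul, ofReal_pow, ← mul_conj', kernelOperator, ← integral_conj, ← integral_prod_mul,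
    ← integral_const_mul]
  refine integral_congr_ae (ae_of_all _ fun p ↦ ?_)
  simp only [map_mul]
  ring

variable [MeasurableSpace α] {μ : Measure α}

lemma aestronglyMeasurable_kernelOperator [SFinite ν] (hk : Measurable (Function.uncurry k))
    (hf : AEStronglyMeasurable f ν) : AEStronglyMeasurable (kernelOperator ν k f) μ :=
  (hk.aestronglyMeasurable.mul hf.comp_snd).integral_prod_right'

lemma aestronglyMeasurable_gramKernel [SFinite μ] (hk : Measurable (Function.uncurry k))
    (hg : AEStronglyMeasurable g μ) {γ : Type*} [MeasurableSpace γ] {ρ : Measure γ} {u v : γ → β}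
    (hu : Measurable u) (hv : Measurable v) :
    AEStronglyMeasurable (fun c ↦ gramKernel μ g k (u c) (v c)) ρ := by
  have hku : Measurable fun p : γ × α ↦ k p.2 (u p.1) :=
    hk.comp (measurable_snd.prodMk (hu.comp measurable_fst))
  have hkv : Measurable fun p : γ × α ↦ k p.2 (v p.1) :=
    hk.comp (measurable_snd.prodMk (hv.comp measurable_fst))
  exact ((continuous_ofReal.comp_aestronglyMeasurable hg.comp_snd).mul
    (hku.mul (continuous_conj.measurable.comp hkv)).aestronglyMeasurable).integral_prod_right'

lemma integrable_gram_integrand [SFinite μ] [SFinite ν] (hk : Measurable (Function.uncurry k))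
    (hB : ∀ x y, ‖k x y‖ ≤ B) (hg : Integrable g μ) (hf : Integrable f ν) :
    Integrable (fun q : α × β × β ↦
      (g q.1 : ℂ) * (k q.1 q.2.1 * conj (k q.1 q.2.2)) * (f q.2.1 * conj (f q.2.2)))
      (μ.prod (ν.prod ν)) := by
  have hk₁ : Measurable fun q : α × β × β ↦ k q.1 q.2.1 :=
    hk.comp (measurable_fst.prodMk (measurable_fst.comp measurable_snd))
  have hk₂ : Measurable fun q : α × β × β ↦ conj (k q.1 q.2.2) :=
    continuous_conj.measurable.comp
      (hk.comp (measurable_fst.prodMk (measurable_snd.comp measurable_snd)))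
  have hf_conj : Integrable (fun y ↦ conj (f y)) ν := RCLike.conjCLE.integrable_comp_iff.2 hf
  have hbound (q : α × β × β) : ‖k q.1 q.2.1 * conj (k q.1 q.2.2)‖ ≤ B * B := by
    rw [norm_mul, RCLike.norm_conj]
    exact mul_le_mul (hB _ _) (hB _ _) (norm_nonneg _) ((norm_nonneg _).trans (hB q.1 q.2.1))
  refine ((hg.ofReal (𝕜 := ℂ).mul_prod (hf.mul_prod hf_conj)).bdd_mul
    (hk₁.mul hk₂).aestronglyMeasurable (ae_of_all _ hbound)).congr (ae_of_all _ fun q ↦ ?_)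
  simp only [RCLike.ofReal_eq_complex_ofReal, Pi.mul_apply]
  ring

lemma lintegral_mul_enorm_kernelOperator_sq [SFinite μ] [SFinite ν]
    (hk : Measurable (Function.uncurry k)) (hB : ∀ x y, ‖k x y‖ ≤ B) (hg : Integrable g μ)
    (hg₀ : ∀ x, 0 ≤ g x) (hf : Integrable f ν) :
    ∫⁻ x, ENNReal.ofReal (g x) * ‖kernelOperator ν k f x‖ₑ ^ 2 ∂μ =
      ‖∫ p : β × β, gramKernel μ g k p.1 p.2 * (f p.1 * conj (f p.2)) ∂ν.prod ν‖ₑ := by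
  have htriple := integrable_gram_integrand hk hB hg hf
  have hnonneg (x) : 0 ≤ g x * ‖kernelOperator ν k f x‖ ^ 2 := mul_nonneg (hg₀ x) (by positivity)
  have hint : Integrable (fun x ↦ g x * ‖kernelOperator ν k f x‖ ^ 2) μ := by
    refine (htriple.integral_prod_left.congr (ae_of_all _ fun x ↦ ?_)).re (f := fun x ↦
      ((g x * ‖kernelOperator ν k f x‖ ^ 2 : ℝ) : ℂ))
    exact (ofReal_mul_norm_kernelOperator_sq x).symm
  have hswap : ∫ x, ((g x * ‖kernelOperator ν k f x‖ ^ 2 : ℝ) : ℂ) ∂μ =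
      ∫ p : β × β, gramKernel μ g k p.1 p.2 * (f p.1 * conj (f p.2)) ∂ν.prod ν := by
    simp only [ofReal_mul_norm_kernelOperator_sq]
    rw [integral_integral_swap htriple]
    simp only [integral_mul_const, gramKernel]
  rw [← hswap, integral_complex_ofReal, ← ofReal_norm, norm_real,
    Real.norm_of_nonneg (integral_nonneg hnonneg),
    ofReal_integral_eq_lintegral_ofReal hint (ae_of_all _ hnonneg)]
  refine lintegral_congr fun x ↦ ?_
  rw [ENNReal.ofReal_mul (hg₀ x), ENNReal.ofReal_pow (norm_nonneg _), ofReal_norm]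

end KernelOperator

lemma two_mul_mul_le_sq_add_sq (x y : ℝ≥0∞) : 2 * (x * y) ≤ x ^ 2 + y ^ 2 := by
  rcases eq_or_ne x ∞ with rfl | hx
  · simp
  rcases eq_or_ne y ∞ with rfl | hy
  · simp
  lift x to ℝ≥0 using hx
  lift y to ℝ≥0 using hy
  norm_cast
  simpa only [mul_assoc] using two_mul_le_add_sq x y

/-- Schur's test for a symmetric kernel. -/
lemma lintegral_mul_mul_le_of_symm {β : Type*} [MeasurableSpace β] {ν : Measure β} [SFinite ν]
    {K : β → β → ℝ≥0∞} {w : β → ℝ≥0∞} {M : ℝ≥0∞}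
    (hK : AEMeasurable (Function.uncurry K) (ν.prod ν)) (hK_symm : ∀ y y', K y' y = K y y')
    (hKM : ∀ y, ∫⁻ y', K y y' ∂ν ≤ M) (hw : AEMeasurable w ν) :
    ∫⁻ p, K p.1 p.2 * (w p.1 * w p.2) ∂ν.prod ν ≤ M * ∫⁻ y, w y ^ 2 ∂ν := by
  have hfst : AEMeasurable (fun p : β × β ↦ K p.1 p.2 * w p.1 ^ 2) (ν.prod ν) :=
    hK.mul (hw.comp_fst.pow_const 2)
  have hsnd : AEMeasurable (fun p : β × β ↦ K p.1 p.2 * w p.2 ^ 2) (ν.prod ν) :=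
    hK.mul (hw.comp_snd.pow_const 2)
  have hrow : ∫⁻ y, ∫⁻ y', K y y' * w y ^ 2 ∂ν ∂ν ≤ M * ∫⁻ y, w y ^ 2 ∂ν := by
    rw [← lintegral_const_mul'' _ (hw.pow_const 2)]
    refine lintegral_mono_ae ?_
    filter_upwards [hK.aestronglyMeasurable.prodMk_left] with y (hy : AEStronglyMeasurable (K y) ν)
    rw [lintegral_mul_const'' _ hy.aemeasurable]
    gcongr
    exact hKM y
  have hcol : ∫⁻ y', ∫⁻ y, K y y' * w y' ^ 2 ∂ν ∂ν ≤ M * ∫⁻ y, w y ^ 2 ∂ν := by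
    simpa only [hK_symm] using hrow
  refine (ENNReal.mul_le_mul_iff_right two_ne_zero ENNReal.ofNat_ne_top).1 ?_
  calc 2 * ∫⁻ p, K p.1 p.2 * (w p.1 * w p.2) ∂ν.prod ν
      = ∫⁻ p, 2 * (K p.1 p.2 * (w p.1 * w p.2)) ∂ν.prod ν :=
        (lintegral_const_mul' _ _ ENNReal.ofNat_ne_top).symm
    _ ≤ ∫⁻ p, (K p.1 p.2 * w p.1 ^ 2 + K p.1 p.2 * w p.2 ^ 2) ∂ν.prod ν := by
        refine lintegral_mono fun p ↦ ?_
        rw [mul_left_comm, ← mul_add]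
        gcongr
        exact two_mul_mul_le_sq_add_sq _ _
    _ = (∫⁻ y, ∫⁻ y', K y y' * w y ^ 2 ∂ν ∂ν) + ∫⁻ y', ∫⁻ y, K y y' * w y' ^ 2 ∂ν ∂ν := by
        rw [lintegral_add_left' hfst, lintegral_prod _ hfst, lintegral_prod_symm _ hsnd]
    _ ≤ 2 * (M * ∫⁻ y, w y ^ 2 ∂ν) := by
        rw [two_mul]
        exact add_le_add hrow hcol

section SchurKernel

variable {α β : Type*} [MeasurableSpace α] [MeasurableSpace β] {μ : Measure α} {ν : Measure β}
  {k : α → β → ℂ} {f : β → ℂ} {g : α → ℝ} {B : ℝ}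

/-- A nonnegative integrable cut-off `g` for which all rows of the Gram kernel of `k` have mass at
most `1`. -/
structure IsSchurCutoff (μ : Measure α) (ν : Measure β) (k : α → β → ℂ) (g : α → ℝ) : Prop where
  integrable : Integrable g μ
  nonneg : ∀ x, 0 ≤ g x
  lintegral_gramKernel_le : ∀ y, ∫⁻ y', ‖gramKernel μ g k y y'‖ₑ ∂ν ≤ 1

/-- A measurable kernel bounded by `B` with Schur cut-offs converging to `1`. By `TT*` such kernels
act as contractions from `L²` to `L²`; the cut-offs are there because the integral defining the
Gram kernel of an oscillatory kernel diverges. -/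
structure IsSchurKernel (μ : Measure α) (ν : Measure β) (k : α → β → ℂ) (B : ℝ) : Prop where
  measurable : Measurable (Function.uncurry k)
  norm_le : ∀ x y, ‖k x y‖ ≤ B
  exists_cutoff : ∃ g : ℕ → α → ℝ, (∀ n, IsSchurCutoff μ ν k (g n)) ∧
    ∀ x, Tendsto (fun n ↦ g n x) atTop (𝓝 1)

lemma IsSchurCutoff.of_gramKernel_eq {p : β → β → ℝ} (hg : Integrable g μ) (hg₀ : ∀ x, 0 ≤ g x)
    (hgram : ∀ y y', gramKernel μ g k y y' = p y y') (hp₀ : ∀ y y', 0 ≤ p y y')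
    (hp : ∀ y, ∫ y', p y y' ∂ν = 1) : IsSchurCutoff μ ν k g where
  integrable := hg
  nonneg := hg₀
  lintegral_gramKernel_le y := by
    have hint : Integrable (p y) ν := .of_integral_ne_zero (by simp [hp])
    simp only [hgram, ← ofReal_norm, norm_real, Real.norm_of_nonneg (hp₀ _ _)]
    rw [← ofReal_integral_eq_lintegral_ofReal hint (ae_of_all _ (hp₀ y)), hp, ENNReal.ofReal_one]

lemma IsSchurCutoff.lintegral_mul_enorm_kernelOperator_sq_le [SFinite μ] [SFinite ν]
    (hg : IsSchurCutoff μ ν k g) (hk : Measurable (Function.uncurry k))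
    (hB : ∀ x y, ‖k x y‖ ≤ B) (hf : Integrable f ν) :
    ∫⁻ x, ENNReal.ofReal (g x) * ‖kernelOperator ν k f x‖ₑ ^ 2 ∂μ ≤ ∫⁻ y, ‖f y‖ₑ ^ 2 ∂ν := by
  rw [lintegral_mul_enorm_kernelOperator_sq hk hB hg.integrable hg.nonneg hf]
  refine (enorm_integral_le_lintegral_enorm _).trans ?_
  simp only [enorm_mul, RCLike.enorm_conj]
  simpa only [one_mul] using lintegral_mul_mul_le_of_symm
    (aestronglyMeasurable_gramKernel hk hg.integrable.1 measurable_fst measurable_snd).enorm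
    enorm_gramKernel_comm hg.lintegral_gramKernel_le hf.1.enorm

lemma IsSchurKernel.eLpNorm_kernelOperator_top_le (hk : IsSchurKernel μ ν k B) :
    eLpNorm (kernelOperator ν k f) ∞ μ ≤ ENNReal.ofReal B * eLpNorm f 1 ν :=
  eLpNormEssSup_le_of_ae_enorm_bound (ae_of_all _ (enorm_kernelOperator_le hk.norm_le f))

lemma IsSchurKernel.eLpNorm_kernelOperator_two_le [SFinite μ] [SFinite ν]
    (hk : IsSchurKernel μ ν k B) (hf : Integrable f ν) :
    eLpNorm (kernelOperator ν k f) 2 μ ≤ eLpNorm f 2 ν := by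
  obtain ⟨g, hg, hg_lim⟩ := hk.exists_cutoff
  have hTf : AEStronglyMeasurable (kernelOperator ν k f) μ :=
    aestronglyMeasurable_kernelOperator hk.measurable hf.1
  have hlim (x) : Tendsto (fun n ↦ ENNReal.ofReal (g n x) * ‖kernelOperator ν k f x‖ₑ ^ 2) atTop
      (𝓝 (‖kernelOperator ν k f x‖ₑ ^ 2)) := by
    simpa using ENNReal.Tendsto.mul_const (ENNReal.tendsto_ofReal (hg_lim x)) (.inl (by simp))
  have hsq : ∫⁻ x, ‖kernelOperator ν k f x‖ₑ ^ 2 ∂μ ≤ ∫⁻ y, ‖f y‖ₑ ^ 2 ∂ν := by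
    rw [← lintegral_congr fun x ↦ (hlim x).liminf_eq]
    refine (lintegral_liminf_le' fun n ↦
      (hg n).integrable.1.aemeasurable.ennreal_ofReal.mul (hTf.enorm.pow_const 2)).trans ?_
    exact liminf_le_of_frequently_le' (.of_forall fun n ↦
      (hg n).lintegral_mul_enorm_kernelOperator_sq_le hk.measurable hk.norm_le hf)
  simp only [eLpNorm_eq_lintegral_rpow_enorm_toReal two_ne_zero ENNReal.ofNat_ne_top,
    ENNReal.toReal_ofNat, ENNReal.rpow_two]
  gcongr

lemma IsSchurKernel.unimodular_mul {u : α → ℂ} {v : β → ℂ} (hk : IsSchurKernel μ ν k B)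
    (hu_meas : Measurable u) (hv_meas : Measurable v) (hu : ∀ x, ‖u x‖ = 1) (hv : ∀ y, ‖v y‖ = 1) :
    IsSchurKernel μ ν (fun x y ↦ u x * v y * k x y) B where
  measurable :=
    ((hu_meas.comp measurable_fst).mul (hv_meas.comp measurable_snd)).mul hk.measurable
  norm_le x y := by simpa [hu, hv] using hk.norm_le x y
  exists_cutoff := by
    have hv' (y) : ‖v y‖ₑ = 1 := by simp [← ofReal_norm, hv]
    obtain ⟨g, hg, hg_lim⟩ := hk.exists_cutoff
    refine ⟨g, fun n ↦ ⟨(hg n).integrable, (hg n).nonneg, fun y ↦ ?_⟩, hg_lim⟩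
    simpa [gramKernel_unimodular_mul v hu, hv'] using (hg n).lintegral_gramKernel_le y

end SchurKernel

section Prod

variable {α α' β β' : Type*} [MeasurableSpace α] [MeasurableSpace α'] [MeasurableSpace β]
  [MeasurableSpace β'] {μ : Measure α} {μ' : Measure α'} {ν : Measure β} {ν' : Measure β'}
  {k : α → β → ℂ} {k' : α' → β' → ℂ} {g : α → ℝ} {g' : α' → ℝ} {B B' : ℝ}

lemma IsSchurCutoff.prod [SFinite μ] [SFinite μ'] [SFinite ν'] (hg : IsSchurCutoff μ ν k g)
    (hg' : IsSchurCutoff μ' ν' k' g') (hk : Measurable (Function.uncurry k))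
    (hk' : Measurable (Function.uncurry k')) :
    IsSchurCutoff (μ.prod μ') (ν.prod ν') (fun X Y ↦ k X.1 Y.1 * k' X.2 Y.2)
      (fun X ↦ g X.1 * g' X.2) where
  integrable := hg.integrable.mul_prod hg'.integrable
  nonneg X := mul_nonneg (hg.nonneg _) (hg'.nonneg _)
  lintegral_gramKernel_le Y := by
    simp only [gramKernel_prod, enorm_mul]
    have hrow : AEMeasurable (fun y' ↦ ‖gramKernel μ g k Y.1 y'‖ₑ) ν :=
      (aestronglyMeasurable_gramKernel hk hg.integrable.1 measurable_const measurable_id).enorm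
    have hrow' : AEMeasurable (fun y' ↦ ‖gramKernel μ' g' k' Y.2 y'‖ₑ) ν' :=
      (aestronglyMeasurable_gramKernel hk' hg'.integrable.1 measurable_const measurable_id).enorm
    rw [lintegral_prod_mul hrow hrow']
    exact mul_le_one' (hg.lintegral_gramKernel_le _) (hg'.lintegral_gramKernel_le _)

lemma IsSchurKernel.prod [SFinite μ] [SFinite μ'] [SFinite ν'] (hk : IsSchurKernel μ ν k B)
    (hk' : IsSchurKernel μ' ν' k' B') :
    IsSchurKernel (μ.prod μ') (ν.prod ν') (fun X Y ↦ k X.1 Y.1 * k' X.2 Y.2) (B * B') where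
  measurable := by
    have h₁ := hk.measurable.comp (f := fun p : (α × α') × β × β' ↦ (p.1.1, p.2.1)) (by fun_prop)
    have h₂ := hk'.measurable.comp (f := fun p : (α × α') × β × β' ↦ (p.1.2, p.2.2)) (by fun_prop)
    exact h₁.mul h₂
  norm_le X Y := by
    rw [norm_mul]
    exact mul_le_mul (hk.norm_le _ _) (hk'.norm_le _ _) (norm_nonneg _)
      ((norm_nonneg _).trans (hk.norm_le X.1 Y.1))
  exists_cutoff := by
    obtain ⟨g, hg, hg_lim⟩ := hk.exists_cutoff
    obtain ⟨g', hg', hg'_lim⟩ := hk'.exists_cutoff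
    exact ⟨fun n X ↦ g n X.1 * g' n X.2,
      fun n ↦ (hg n).prod (hg' n) hk.measurable hk'.measurable,
      fun X ↦ by simpa using (hg_lim X.1).mul (hg'_lim X.2)⟩

end Prod

lemma setLIntegral_Ioc_rpow {r D : ℝ} (hr : -1 < r) (hD : 0 ≤ D) :
    ∫⁻ s in Set.Ioc 0 D, ENNReal.ofReal (s ^ r) = ENNReal.ofReal (D ^ (r + 1) / (r + 1)) := by
  have hint : IntegrableOn (fun s : ℝ ↦ s ^ r) (Set.Ioc 0 D) := by
    rw [← intervalIntegrable_iff_integrableOn_Ioc_of_le hD]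
    exact intervalIntegral.intervalIntegrable_rpow' hr
  rw [← ofReal_integral_eq_lintegral_ofReal hint
      (ae_restrict_of_forall_mem measurableSet_Ioc fun s hs ↦ Real.rpow_nonneg hs.1.le _),
    ← intervalIntegral.integral_of_le hD, integral_rpow (.inl hr), Real.zero_rpow (by linarith),
    sub_zero]

lemma setLIntegral_Ioi_rpow_mul_indicator {β E : Type*} [NormedAddCommGroup E] (f : β → E)
    {A r : ℝ} (hr : 2 < r) (hA : 0 < A) (y : β) :
    ∫⁻ s in Set.Ioi (0 : ℝ), ENNReal.ofReal (s ^ (r - 3)) *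
        ‖{y | ‖f y‖ ≤ (A / s) ^ (r - 1)}.indicator f y‖ₑ ^ 2 =
      ENNReal.ofReal (A ^ (r - 2) / (r - 2)) * ‖f y‖ₑ ^ (r / (r - 1)) := by
  have hr₁ : 0 < r - 1 := by linarith
  obtain hy | hy := eq_or_ne (f y) 0
  · simp [Set.indicator_apply, hy, hr₁, (by linarith : 0 < r)]
  have hy₀ : 0 < ‖f y‖ := norm_pos_iff.2 hy
  set D := A / ‖f y‖ ^ (r - 1)⁻¹
  have hD : 0 < D := by positivity
  have hcut (s : ℝ) (hs : 0 < s) : ‖f y‖ ≤ (A / s) ^ (r - 1) ↔ s ≤ D := by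
    rw [← Real.rpow_inv_le_iff_of_pos hy₀.le (by positivity) hr₁, le_div_comm₀ (by positivity) hs]
  calc ∫⁻ s in Set.Ioi (0 : ℝ), ENNReal.ofReal (s ^ (r - 3)) *
        ‖{y | ‖f y‖ ≤ (A / s) ^ (r - 1)}.indicator f y‖ₑ ^ 2
      = ∫⁻ s in Set.Ioi (0 : ℝ), (Set.Iic D).indicator
          (fun s ↦ ENNReal.ofReal (s ^ (r - 3)) * ‖f y‖ₑ ^ 2) s := by
        refine setLIntegral_congr_fun measurableSet_Ioi fun s hs ↦ ?_
        by_cases hsD : s ≤ D <;> simp [hcut s hs, hsD]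
    _ = ENNReal.ofReal (D ^ (r - 2) / (r - 2)) * ‖f y‖ₑ ^ 2 := by
        rw [lintegral_indicator measurableSet_Iic, Measure.restrict_restrict measurableSet_Iic,
          Set.Iic_inter_Ioi, lintegral_mul_const' _ _ (by simp),
          setLIntegral_Ioc_rpow (by linarith) hD.le, show r - 3 + 1 = r - 2 by ring]
    _ = ENNReal.ofReal (A ^ (r - 2) / (r - 2)) * ‖f y‖ₑ ^ (r / (r - 1)) := by
        have hexp : ‖f y‖ ^ (2 : ℝ) = ‖f y‖ ^ (r / (r - 1)) * ‖f y‖ ^ ((r - 1)⁻¹ * (r - 2)) := by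
          rw [← Real.rpow_add hy₀]
          congr 1
          field_simp
          ring
        rw [← ofReal_norm, ENNReal.ofReal_rpow_of_pos hy₀, ← ENNReal.ofReal_pow hy₀.le,
          ← ENNReal.ofReal_mul (by bound), ← ENNReal.ofReal_mul (by bound),
          Real.div_rpow hA.le (by positivity), ← Real.rpow_mul hy₀.le, ← Real.rpow_two, hexp]
        congr 1
        field_simp

section Interpolation

variable {α β E F : Type*} [MeasurableSpace α] [MeasurableSpace β] [NormedAddCommGroup E]
  [NormedAddCommGroup F] {μ : Measure α} {ν : Measure β} {f : β → E} {T : (β → E) → α → F}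
  {A B l p r s : ℝ}

/-- A sublinear operator on `L¹`, bounded by `B` from `L¹` to `L^∞` and by `1` from `L²` to `L²`:
the endpoint bounds of a dispersive estimate. -/
structure IsDispersiveOperator (μ : Measure α) (ν : Measure β) (T : (β → E) → α → F) (B : ℝ) :
    Prop where
  aestronglyMeasurable : ∀ f, Integrable f ν → AEStronglyMeasurable (T f) μ
  norm_add_le : ∀ f₁ f₂, Integrable f₁ ν → Integrable f₂ ν →
    ∀ᵐ x ∂μ, ‖T (f₁ + f₂) x‖ ≤ ‖T f₁ x‖ + ‖T f₂ x‖
  eLpNorm_top_le : ∀ f, Integrable f ν → eLpNorm (T f) ∞ μ ≤ ENNReal.ofReal B * eLpNorm f 1 ν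
  eLpNorm_two_le : ∀ f, Integrable f ν → eLpNorm (T f) 2 μ ≤ eLpNorm f 2 ν

lemma eLpNorm_one_indicator_norm_gt_le (f : β → E) (hp : 1 ≤ p) (hl : 0 < l) :
    eLpNorm ({y | ‖f y‖ ≤ l}ᶜ.indicator f) 1 ν ≤
      ENNReal.ofReal (l ^ (1 - p)) * ∫⁻ y, ‖f y‖ₑ ^ p ∂ν := by
  rw [eLpNorm_one_eq_lintegral_enorm, ← lintegral_const_mul' _ _ ENNReal.ofReal_ne_top]
  refine lintegral_mono fun y ↦ ?_
  by_cases hy : ‖f y‖ ≤ l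
  · simp [hy]
  have hly : l ≤ ‖f y‖ := (not_le.1 hy).le
  have hy₀ : 0 < ‖f y‖ := hl.trans_le hly
  rw [Set.indicator_of_mem (show y ∈ {y | ‖f y‖ ≤ l}ᶜ from hy), ← ofReal_norm,
    ENNReal.ofReal_rpow_of_pos hy₀, ← ENNReal.ofReal_mul (by positivity)]
  refine ENNReal.ofReal_le_ofReal ?_
  calc ‖f y‖ = ‖f y‖ ^ (1 - p) * ‖f y‖ ^ p := by simp [← Real.rpow_add hy₀]
    _ ≤ l ^ (1 - p) * ‖f y‖ ^ p := by
        gcongr ?_ * _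
        exact Real.rpow_le_rpow_of_nonpos hl hly (by linarith)

lemma IsDispersiveOperator.meas_lt_norm_le (hT : IsDispersiveOperator μ ν T B)
    (hf : Integrable f ν) (hs : 0 < s)
    (hl : ENNReal.ofReal B * eLpNorm ({y | ‖f y‖ ≤ l}ᶜ.indicator f) 1 ν ≤ ENNReal.ofReal (s / 2)) :
    μ {x | s < ‖T f x‖} ≤
      ENNReal.ofReal (4 / s ^ 2) * ∫⁻ y, ‖{y | ‖f y‖ ≤ l}.indicator f y‖ₑ ^ 2 ∂ν := by
  set S := {y | ‖f y‖ ≤ l}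
  have hS : NullMeasurableSet S ν := nullMeasurableSet_le hf.1.norm.aemeasurable aemeasurable_const
  have hlarge := hf.indicator₀ hS.compl
  have hsmall := hf.indicator₀ hS
  have hsub : {x | s < ‖T f x‖} ≤ᵐ[μ] {x | ENNReal.ofReal (s / 2) ≤ ‖T (S.indicator f) x‖ₑ} := by
    filter_upwards [hT.norm_add_le _ _ hlarge hsmall, ae_le_eLpNormEssSup (f := T (Sᶜ.indicator f))]
      with x hadd hsup (hx : s < ‖T f x‖)
    have hhalf : ‖T (Sᶜ.indicator f) x‖ ≤ s / 2 := by
      rw [← ENNReal.ofReal_le_ofReal_iff (by positivity), ofReal_norm]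
      exact hsup.trans ((hT.eLpNorm_top_le _ hlarge).trans hl)
    rw [Set.indicator_compl_add_self] at hadd
    change ENNReal.ofReal (s / 2) ≤ ‖T (S.indicator f) x‖ₑ
    rw [← ofReal_norm]
    exact ENNReal.ofReal_le_ofReal (by linarith)
  calc μ {x | s < ‖T f x‖}
      ≤ (ENNReal.ofReal (s / 2))⁻¹ ^ (2 : ℝ) * eLpNorm (T (S.indicator f)) 2 μ ^ (2 : ℝ) :=
        (measure_mono_ae hsub).trans (meas_ge_le_mul_pow_eLpNorm_enorm μ two_ne_zero
          ENNReal.ofNat_ne_top (hT.aestronglyMeasurable _ hsmall) (by simpa using hs) (by simp))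
    _ ≤ (ENNReal.ofReal (s / 2))⁻¹ ^ (2 : ℝ) * eLpNorm (S.indicator f) 2 ν ^ (2 : ℝ) := by
        gcongr
        exact hT.eLpNorm_two_le _ hsmall
    _ = ENNReal.ofReal (4 / s ^ 2) * ∫⁻ y, ‖S.indicator f y‖ₑ ^ 2 ∂ν := by
        rw [eLpNorm_eq_lintegral_rpow_enorm_toReal two_ne_zero ENNReal.ofNat_ne_top,
          ENNReal.toReal_ofNat, ← ENNReal.rpow_mul, one_div_mul_cancel two_ne_zero,
          ENNReal.rpow_one,
          ← ENNReal.ofReal_inv_of_pos (by positivity), ENNReal.rpow_two,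
          ← ENNReal.ofReal_pow (by positivity)]
        simp only [ENNReal.rpow_two]
        congr 2
        ring

lemma lintegral_setLIntegral_rpow_mul_indicator [SFinite ν] (hf : AEStronglyMeasurable f ν)
    (hr : 2 < r) (hA : 0 < A) :
    ∫⁻ s in Set.Ioi (0 : ℝ), ∫⁻ y, ENNReal.ofReal (s ^ (r - 3)) *
        ‖{y | ‖f y‖ ≤ (A / s) ^ (r - 1)}.indicator f y‖ₑ ^ 2 ∂ν =
      ENNReal.ofReal (A ^ (r - 2) / (r - 2)) * ∫⁻ y, ‖f y‖ₑ ^ (r / (r - 1)) ∂ν := by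
  rw [lintegral_lintegral_swap]
  · simp only [setLIntegral_Ioi_rpow_mul_indicator f hr hA]
    exact lintegral_const_mul' _ _ ENNReal.ofReal_ne_top
  have hset : NullMeasurableSet {p : ℝ × β | ‖f p.2‖ ≤ (A / p.1) ^ (r - 1)}
      ((volume.restrict (Set.Ioi 0)).prod ν) :=
    nullMeasurableSet_le hf.comp_snd.norm.aemeasurable (by fun_prop)
  exact AEMeasurable.mul (by fun_prop) ((hf.comp_snd.indicator₀ hset).enorm.pow_const 2)

lemma IsDispersiveOperator.meas_lt_norm_mul_rpow_le (hT : IsDispersiveOperator μ ν T B)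
    (hf : Integrable f ν) (hr : 1 < r) (hA : 0 < A)
    (hBA : ENNReal.ofReal (2 * B) * ∫⁻ y, ‖f y‖ₑ ^ (r / (r - 1)) ∂ν ≤ ENNReal.ofReal A)
    (hs : 0 < s) :
    μ {x | s < ‖T f x‖} * ENNReal.ofReal (s ^ (r - 1)) ≤ 4 * ∫⁻ y, ENNReal.ofReal (s ^ (r - 3)) *
      ‖{y | ‖f y‖ ≤ (A / s) ^ (r - 1)}.indicator f y‖ₑ ^ 2 ∂ν := by
  set N := ∫⁻ y, ‖f y‖ₑ ^ (r / (r - 1)) ∂ν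
  have hr₁ : 0 < r - 1 := by linarith
  have hheight : ((A / s) ^ (r - 1)) ^ (1 - r / (r - 1)) = s / A := by
    rw [← Real.rpow_mul (by positivity), show (r - 1) * (1 - r / (r - 1)) = -1 by field_simp; ring,
      Real.rpow_neg_one, inv_div]
  have hlarge : ENNReal.ofReal B *
      eLpNorm ({y | ‖f y‖ ≤ (A / s) ^ (r - 1)}ᶜ.indicator f) 1 ν ≤ ENNReal.ofReal (s / 2) := by
    calc _ ≤ ENNReal.ofReal B * (ENNReal.ofReal (s / A) * N) := by
          rw [← hheight]
          gcongr
          exact eLpNorm_one_indicator_norm_gt_le f (by rw [le_div_iff₀ hr₁]; linarith)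
            (by positivity)
      _ = ENNReal.ofReal (s / (2 * A)) * (ENNReal.ofReal (2 * B) * N) := by
          rw [← mul_assoc, ← mul_assoc, ← ENNReal.ofReal_mul' (by positivity),
            ← ENNReal.ofReal_mul (by positivity)]
          congr 2
          field_simp
      _ ≤ ENNReal.ofReal (s / (2 * A)) * ENNReal.ofReal A := by gcongr
      _ = ENNReal.ofReal (s / 2) := by
          rw [← ENNReal.ofReal_mul (by positivity)]
          congr 1
          field_simp
  have hpow : ENNReal.ofReal (4 / s ^ 2) * ENNReal.ofReal (s ^ (r - 1)) =
      4 * ENNReal.ofReal (s ^ (r - 3)) := by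
    rw [← ENNReal.ofReal_mul (by positivity), show r - 1 = r - 3 + 2 by ring, Real.rpow_add hs,
      Real.rpow_two, ← ENNReal.ofReal_ofNat, ← ENNReal.ofReal_mul (by positivity)]
    congr 1
    field_simp
  grw [hT.meas_lt_norm_le hf hs hlarge, mul_right_comm, hpow, mul_assoc,
    lintegral_const_mul' _ _ ENNReal.ofReal_ne_top]

/-- Marcinkiewicz interpolation: `f` is cut at the height `(A / s) ^ (r - 1)`, which depends on the
level `s` so that the large part of `f` contributes at most `s / 2` to `T f`. -/
lemma IsDispersiveOperator.lintegral_enorm_rpow_le [SFinite ν] (hT : IsDispersiveOperator μ ν T B)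
    (hf : Integrable f ν) (hr : 2 < r) (hA : 0 < A)
    (hBA : ENNReal.ofReal (2 * B) * ∫⁻ y, ‖f y‖ₑ ^ (r / (r - 1)) ∂ν ≤ ENNReal.ofReal A) :
    ∫⁻ x, ‖T f x‖ₑ ^ r ∂μ ≤ ENNReal.ofReal (4 * r / (r - 2) * A ^ (r - 2)) *
      ∫⁻ y, ‖f y‖ₑ ^ (r / (r - 1)) ∂ν := by
  set N := ∫⁻ y, ‖f y‖ₑ ^ (r / (r - 1)) ∂ν
  have hr₀ : 0 < r := by linarith
  calc ∫⁻ x, ‖T f x‖ₑ ^ r ∂μ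
      = ENNReal.ofReal r *
          ∫⁻ s in Set.Ioi 0, μ {x | s < ‖T f x‖} * ENNReal.ofReal (s ^ (r - 1)) := by
        rw [← lintegral_rpow_eq_lintegral_meas_lt_mul μ (ae_of_all _ fun _ ↦ norm_nonneg _)
          (hT.aestronglyMeasurable f hf).norm.aemeasurable hr₀]
        simp only [← ENNReal.ofReal_rpow_of_nonneg (norm_nonneg _) hr₀.le, ofReal_norm]
    _ ≤ ENNReal.ofReal r * ∫⁻ s in Set.Ioi (0 : ℝ), 4 * ∫⁻ y, ENNReal.ofReal (s ^ (r - 3)) *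
          ‖{y | ‖f y‖ ≤ (A / s) ^ (r - 1)}.indicator f y‖ₑ ^ 2 ∂ν := by
        refine mul_le_mul_right (setLIntegral_mono' measurableSet_Ioi fun s hs ↦ ?_) _
        exact hT.meas_lt_norm_mul_rpow_le hf (by linarith) hA hBA hs
    _ = ENNReal.ofReal r * (4 * (ENNReal.ofReal (A ^ (r - 2) / (r - 2)) * N)) := by
        rw [lintegral_const_mul' _ _ ENNReal.ofNat_ne_top,
          lintegral_setLIntegral_rpow_mul_indicator hf.1 hr hA]
    _ = ENNReal.ofReal (4 * r / (r - 2) * A ^ (r - 2)) * N := by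
        rw [← ENNReal.ofReal_ofNat 4, ← mul_assoc, ← mul_assoc, ← ENNReal.ofReal_mul hr₀.le,
          ← ENNReal.ofReal_mul (by positivity)]
        congr 2
        ring

lemma rpow_mul_rpow_rpow_one_div {K b m r : ℝ} (hK : 0 < K) (hb : 0 < b) (hm : 0 < m)
    (hr : 1 < r) :
    (K * (b * m ^ (r / (r - 1))) ^ (r - 2) * m ^ (r / (r - 1))) ^ (1 / r) =
      K ^ (1 / r) * b ^ (1 - 2 / r) * m := by
  have hr₁ : 0 < r - 1 := by linarith
  have hpow : (b * m ^ (r / (r - 1))) ^ (r - 2) * m ^ (r / (r - 1)) = b ^ (r - 2) * m ^ r := by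
    rw [Real.mul_rpow hb.le (by positivity), mul_assoc, ← Real.rpow_mul hm.le, ← Real.rpow_add hm]
    congr 2
    field_simp
    ring
  rw [mul_assoc, hpow, Real.mul_rpow hK.le (by positivity),
    Real.mul_rpow (by positivity) (by positivity), ← Real.rpow_mul hb.le, ← Real.rpow_mul hm.le,
    mul_one_div_cancel (by linarith), Real.rpow_one, mul_assoc]
  congr 3
  field_simp

lemma lintegral_enorm_rpow_of_eLpNorm_eq {m : ℝ} (hp : 0 < p) (hm : 0 < m)
    (hfm : eLpNorm f (ENNReal.ofReal p) ν = ENNReal.ofReal m) :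
    ∫⁻ y, ‖f y‖ₑ ^ p ∂ν = ENNReal.ofReal (m ^ p) := by
  rw [lintegral_rpow_enorm_eq_rpow_eLpNorm' hp, ← ENNReal.toReal_ofReal hp.le,
    ← eLpNorm_eq_eLpNorm' (by simpa using hp) ENNReal.ofReal_ne_top, hfm,
    ENNReal.toReal_ofReal hp.le, ENNReal.ofReal_rpow_of_pos hm]

lemma IsDispersiveOperator.eLpNorm_ofReal_le [SFinite ν] (hT : IsDispersiveOperator μ ν T B)
    (hB : 0 < B) (hf : Integrable f ν) (hr : 2 < r) :
    eLpNorm (T f) (ENNReal.ofReal r) μ ≤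
      ENNReal.ofReal ((4 * r / (r - 2)) ^ (1 / r) * (2 * B) ^ (1 - 2 / r)) *
        eLpNorm f (ENNReal.ofReal (r / (r - 1))) ν := by
  have hr₀ : 0 < r := by linarith
  have hr₁ : 0 < r - 1 := by linarith
  have : 0 < r - 2 := by linarith
  have hr' : 0 < r / (r - 1) := by positivity
  rcases eq_or_ne (eLpNorm f (ENNReal.ofReal (r / (r - 1))) ν) 0 with hzero | hzero
  · have hf₀ : f =ᵐ[ν] 0 := (eLpNorm_eq_zero_iff hf.1 (by simpa using hr')).1 hzero
    have hTf := hT.eLpNorm_two_le f hf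
    rw [eLpNorm_congr_ae hf₀, eLpNorm_zero, nonpos_iff_eq_zero,
      eLpNorm_eq_zero_iff (hT.aestronglyMeasurable f hf) two_ne_zero] at hTf
    simp [eLpNorm_congr_ae hTf]
  rcases eq_or_ne (eLpNorm f (ENNReal.ofReal (r / (r - 1))) ν) ∞ with htop | htop
  · have hconst : 0 < (4 * r / (r - 2)) ^ (1 / r) * (2 * B) ^ (1 - 2 / r) := by positivity
    rw [htop, ENNReal.mul_top (by simpa using hconst)]
    exact le_top
  set m := (eLpNorm f (ENNReal.ofReal (r / (r - 1))) ν).toReal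
  have hm : 0 < m := ENNReal.toReal_pos hzero htop
  have hfm : eLpNorm f (ENNReal.ofReal (r / (r - 1))) ν = ENNReal.ofReal m :=
    (ENNReal.ofReal_toReal htop).symm
  have hlint := lintegral_enorm_rpow_of_eLpNorm_eq hr' hm hfm
  have hle := hT.lintegral_enorm_rpow_le (A := 2 * B * m ^ (r / (r - 1))) hf hr (by positivity)
    (by rw [hlint, ← ENNReal.ofReal_mul (by positivity)])
  rw [hlint, ← ENNReal.ofReal_mul (by positivity)] at hle
  rw [eLpNorm_eq_lintegral_rpow_enorm_toReal (by simpa using hr₀) ENNReal.ofReal_ne_top,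
    ENNReal.toReal_ofReal hr₀.le, hfm, ← ENNReal.ofReal_mul (by positivity),
    ← rpow_mul_rpow_rpow_one_div (by positivity) (by positivity) hm (by linarith),
    ← ENNReal.ofReal_rpow_of_pos (by positivity)]
  gcongr

theorem exists_eLpNorm_le_of_isDispersiveOperator [SFinite ν] {r r' : ℝ≥0∞} (hr : 2 ≤ r)
    (hconj : 1 / r + 1 / r' = 1) :
    ∃ C > (0 : ℝ), ∀ {T : (β → E) → α → F} {B : ℝ} {f : β → E},
      0 < B → IsDispersiveOperator μ ν T B → Integrable f ν →
        eLpNorm (T f) r μ ≤ ENNReal.ofReal (C * B ^ (1 - 2 * (1 / r).toReal)) * eLpNorm f r' ν := by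
  have hconj' : r.HolderConjugate r' := ENNReal.holderConjugate_iff.2 (by simpa using hconj)
  rcases eq_or_ne r ∞ with rfl | hr_top
  · obtain rfl : r' = 1 := ENNReal.HolderConjugate.unique ∞ r' 1
    refine ⟨1, one_pos, fun _ hT hf ↦ ?_⟩
    simpa using hT.eLpNorm_top_le _ hf
  rcases eq_or_lt_of_le hr with rfl | hr_two
  · obtain rfl : r' = 2 := ENNReal.HolderConjugate.unique 2 r' 2
    refine ⟨1, one_pos, fun _ hT hf ↦ ?_⟩
    simpa using hT.eLpNorm_two_le _ hf
  lift r to ℝ≥0 using hr_top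
  have hr₂ : (2 : ℝ) < r := by exact_mod_cast hr_two
  have hconj_real : (r : ℝ).HolderConjugate (r / (r - 1)) := .conjExponent (by linarith)
  have : 0 < 4 * (r : ℝ) / (r - 2) := div_pos (by positivity) (by linarith)
  have hofReal : ENNReal.ofReal r = r := ENNReal.ofReal_coe_nnreal
  obtain rfl : r' = ENNReal.ofReal (r / (r - 1)) := by
    have : (r : ℝ≥0∞).HolderConjugate (ENNReal.ofReal (r / (r - 1))) :=
      hofReal ▸ ENNReal.holderConjugate_iff.2 hconj_real.inv_add_inv_ennreal
    exact ENNReal.HolderConjugate.unique r r' _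
  refine ⟨(4 * r / (r - 2)) ^ (1 / r : ℝ) * 2 ^ (1 - 2 / r : ℝ), by positivity,
    fun hB hT hf ↦ ?_⟩
  rw [← hofReal]
  refine (hT.eLpNorm_ofReal_le hB hf hr₂).trans_eq ?_
  rw [Real.mul_rpow zero_le_two hB.le, ← mul_assoc]
  simp [div_eq_mul_inv]

lemma IsSchurKernel.isDispersiveOperator [SFinite μ] [SFinite ν] {k : α → β → ℂ}
    (hk : IsSchurKernel μ ν k B) : IsDispersiveOperator μ ν (kernelOperator ν k) B where
  aestronglyMeasurable f hf := aestronglyMeasurable_kernelOperator hk.measurable hf.1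
  norm_add_le f₁ f₂ hf₁ hf₂ := ae_of_all _ fun x ↦ by
    have hint {f : β → ℂ} (hf : Integrable f ν) : Integrable (fun y ↦ k x y * f y) ν :=
      hf.bdd_mul (hk.measurable.comp measurable_prodMk_left).aestronglyMeasurable
        (ae_of_all _ (hk.norm_le x))
    simp only [kernelOperator, Pi.add_apply, mul_add, integral_add (hint hf₁) (hint hf₂)]
    exact norm_add_le _ _
  eLpNorm_top_le f _ := hk.eLpNorm_kernelOperator_top_le
  eLpNorm_two_le f hf := hk.eLpNorm_kernelOperator_two_le hf

end Interpolation

lemma tendsto_exp_neg_one_div_add_one_mul (c : ℝ) :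
    Tendsto (fun n : ℕ ↦ Real.exp (-(1 / (n + 1)) * c)) atTop (𝓝 1) := by
  have h := (tendsto_one_div_add_atTop_nhds_zero_nat (𝕜 := ℝ)).neg.mul_const c
  simpa [Function.comp_def] using (Real.continuous_exp.tendsto _).comp h

section Hankel

variable {a ν ε s τ : ℝ}

/-- The measure `z ^ a dz` on the half-line `(0, ∞)`. -/
def halfLineMeasure (a : ℝ) : Measure ℝ :=
  ((volume : Measure ℝ).restrict (Set.Ioi 0)).withDensity fun z ↦ ENNReal.ofReal (z ^ a)

instance : SFinite (halfLineMeasure a) := by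
  unfold halfLineMeasure
  infer_instance

lemma integral_halfLineMeasure {E : Type*} [NormedAddCommGroup E] [NormedSpace ℝ E] (f : ℝ → E) :
    ∫ z, f z ∂halfLineMeasure a = ∫ z in Set.Ioi 0, z ^ a • f z := by
  rw [halfLineMeasure, integral_withDensity_eq_integral_toReal_smul (by fun_prop) (by simp)]
  refine setIntegral_congr_fun measurableSet_Ioi fun z (hz : 0 < z) ↦ ?_
  simp only [ENNReal.toReal_ofReal (Real.rpow_nonneg hz.le a)]

/-- The heat kernel at time `s / 4` of the Bessel operator `∂² + (2ν + 1) / z ∂` on the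
half-line. -/
def besselHeatKernel (ν s z ζ : ℝ) : ℝ :=
  2 * s ^ (-(ν + 1)) * Real.exp (-(z ^ 2 + ζ ^ 2) / s) * besselClifford ν ((z * ζ / s) ^ 2)

/-- The kernel of the Hankel transform of order `ν` at scale `τ`, with respect to the measure
`ζ ^ (2ν + 1) dζ`. -/
def hankelKernel (ν τ z ζ : ℝ) : ℂ :=
  (2 * τ ^ (-(ν + 1)) * besselClifford ν (-(z * ζ / τ) ^ 2) : ℝ)

lemma besselHeatKernel_nonneg (hν : -1 < ν) (hs : 0 < s) (z ζ : ℝ) :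
    0 ≤ besselHeatKernel ν s z ζ :=
  mul_nonneg (by positivity) (besselClifford_nonneg hν (sq_nonneg _))

lemma integral_besselHeatKernel (hν : -1 < ν) (hs : 0 < s) (z : ℝ) :
    ∫ ζ, besselHeatKernel ν s z ζ ∂halfLineMeasure (2 * ν + 1) = 1 := by
  have hweber := integral_rpow_mul_exp_mul_besselClifford hν (inv_pos.2 hs) ((z / s) ^ 2)
  calc ∫ ζ, besselHeatKernel ν s z ζ ∂halfLineMeasure (2 * ν + 1)
      = ∫ ζ in Set.Ioi 0, 2 * s ^ (-(ν + 1)) * Real.exp (-z ^ 2 / s) *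
          (ζ ^ (2 * ν + 1) * Real.exp (-s⁻¹ * ζ ^ 2) *
            besselClifford ν ((z / s) ^ 2 * ζ ^ 2)) := by
        rw [integral_halfLineMeasure]
        refine integral_congr_ae (ae_of_all _ fun ζ ↦ ?_)
        simp only [besselHeatKernel, smul_eq_mul]
        rw [show -(z ^ 2 + ζ ^ 2) / s = -z ^ 2 / s + -s⁻¹ * ζ ^ 2 by ring, Real.exp_add,
          show (z * ζ / s) ^ 2 = (z / s) ^ 2 * ζ ^ 2 by ring]
        ring
    _ = s ^ (-(ν + 1)) * s⁻¹ ^ (-(ν + 1)) *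
          (Real.exp (-z ^ 2 / s) * Real.exp ((z / s) ^ 2 / s⁻¹)) := by
        rw [integral_const_mul, hweber]
        ring
    _ = 1 := by
        rw [← Real.mul_rpow hs.le (by positivity), mul_inv_cancel₀ hs.ne', Real.one_rpow,
          ← Real.exp_add, show -z ^ 2 / s + (z / s) ^ 2 / s⁻¹ = 0 by field_simp; ring,
          Real.exp_zero, one_mul]

lemma gramKernel_hankelKernel (hν : -1 < ν) (hε : 0 < ε) (hτ : 0 < τ) (ζ ζ' : ℝ) :
    gramKernel (halfLineMeasure (2 * ν + 1)) (fun z ↦ Real.exp (-ε * z ^ 2)) (hankelKernel ν τ)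
      ζ ζ' = besselHeatKernel ν (ε * τ ^ 2) ζ ζ' := by
  have hweber := integral_rpow_mul_exp_mul_besselClifford_mul_besselClifford hν hε
    (-(ζ / τ) ^ 2) (-(ζ' / τ) ^ 2)
  calc gramKernel (halfLineMeasure (2 * ν + 1)) (fun z ↦ Real.exp (-ε * z ^ 2))
        (hankelKernel ν τ) ζ ζ'
      = ∫ z in Set.Ioi (0 : ℝ), (((2 * τ ^ (-(ν + 1))) ^ 2 *
          (z ^ (2 * ν + 1) * Real.exp (-ε * z ^ 2) *
            (besselClifford ν (-(ζ / τ) ^ 2 * z ^ 2) *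
              besselClifford ν (-(ζ' / τ) ^ 2 * z ^ 2))) : ℝ) : ℂ) := by
        rw [gramKernel, integral_halfLineMeasure]
        refine integral_congr_ae (ae_of_all _ fun z ↦ ?_)
        simp only [hankelKernel, conj_ofReal, real_smul, ← ofReal_mul]
        rw [show -(z * ζ / τ) ^ 2 = -(ζ / τ) ^ 2 * z ^ 2 by ring,
          show -(z * ζ' / τ) ^ 2 = -(ζ' / τ) ^ 2 * z ^ 2 by ring]
        congr 1
        ring
    _ = besselHeatKernel ν (ε * τ ^ 2) ζ ζ' := by
        rw [integral_complex_ofReal, integral_const_mul, hweber, besselHeatKernel,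
          Real.mul_rpow hε.le (by positivity), ← Real.rpow_pow_comm hτ.le,
          show (-(ζ / τ) ^ 2 + -(ζ' / τ) ^ 2) / ε = -(ζ ^ 2 + ζ' ^ 2) / (ε * τ ^ 2) by
            field_simp; ring,
          show -(ζ / τ) ^ 2 * -(ζ' / τ) ^ 2 / ε ^ 2 = (ζ * ζ' / (ε * τ ^ 2)) ^ 2 by
            field_simp]
        congr 1
        ring

lemma norm_hankelKernel_le (hν : -1 / 2 ≤ ν) (hτ : 0 < τ) (z ζ : ℝ) :
    ‖hankelKernel ν τ z ζ‖ ≤ 2 * τ ^ (-(ν + 1)) * (1 / Real.Gamma (ν + 1)) := by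
  rw [hankelKernel, norm_real, norm_mul, Real.norm_of_nonneg (by positivity)]
  gcongr
  exact abs_besselClifford_neg_le hν (sq_nonneg _)

lemma integrable_exp_neg_mul_sq_halfLineMeasure (hν : -1 < ν) (hε : 0 < ε) :
    Integrable (fun z ↦ Real.exp (-ε * z ^ 2)) (halfLineMeasure (2 * ν + 1)) := by
  refine .of_integral_ne_zero ?_
  have hmoment := integral_rpow_mul_exp_neg_mul_sq_mul_pow hν hε 0
  have := gamma_natCast_add_add_one_pos hν 0
  simp only [pow_zero, mul_one, div_one] at hmoment
  simp only [integral_halfLineMeasure, smul_eq_mul, hmoment]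
  positivity

lemma isSchurKernel_hankelKernel (hν : -1 / 2 ≤ ν) (hτ : 0 < τ) :
    IsSchurKernel (halfLineMeasure (2 * ν + 1)) (halfLineMeasure (2 * ν + 1)) (hankelKernel ν τ)
      (2 * τ ^ (-(ν + 1)) * (1 / Real.Gamma (ν + 1))) where
  measurable := by
    have := continuous_besselClifford ν
    unfold hankelKernel
    fun_prop
  norm_le := norm_hankelKernel_le hν hτ
  exists_cutoff := by
    have hν' : -1 < ν := by linarith
    refine ⟨fun n z ↦ Real.exp (-(1 / (n + 1)) * z ^ 2), fun n ↦ ?_,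
      fun z ↦ tendsto_exp_neg_one_div_add_one_mul (z ^ 2)⟩
    have hε : (0 : ℝ) < 1 / (n + 1) := by positivity
    exact .of_gramKernel_eq (integrable_exp_neg_mul_sq_halfLineMeasure hν' hε)
      (fun z ↦ by positivity) (gramKernel_hankelKernel hν' hε hτ)
      (besselHeatKernel_nonneg hν' (by positivity)) (integral_besselHeatKernel hν' (by positivity))

end Hankel

section Fourier

variable {ι : Type*} [Fintype ι] {ε s τ : ℝ}

/-- The Gauss–Weierstrass kernel, that is, the heat kernel of the Laplacian on `ι → ℝ`, at time
`s / 4`. -/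
def gaussKernel (s : ℝ) (x y : ι → ℝ) : ℝ :=
  (Real.pi * s) ^ (-(Fintype.card ι : ℝ) / 2) * Real.exp (-s⁻¹ * ∑ i, (x i - y i) ^ 2)

/-- The kernel of the unitary Fourier transform on `ι → ℝ` at scale `τ`. -/
def fourierKernel (τ : ℝ) (x y : ι → ℝ) : ℂ :=
  ((Real.pi * |τ|) ^ (-(Fintype.card ι : ℝ) / 2) : ℝ) * cexp (-(2 / τ * ∑ i, x i * y i : ℝ) * I)

lemma gaussKernel_nonneg (hs : 0 < s) (x y : ι → ℝ) : 0 ≤ gaussKernel s x y := by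
  unfold gaussKernel
  positivity

lemma integral_exp_neg_mul_sum_sq (hε : 0 < ε) :
    ∫ x : ι → ℝ, Real.exp (-ε * ∑ i, x i ^ 2) = (Real.pi / ε) ^ ((Fintype.card ι : ℝ) / 2) := by
  simp only [Finset.mul_sum, Real.exp_sum]
  rw [integral_fintype_prod_volume_eq_pow (fun v : ℝ ↦ Real.exp (-ε * v ^ 2)), integral_gaussian,
    Real.sqrt_eq_rpow, ← Real.rpow_mul_natCast (by positivity)]
  ring_nf

lemma integral_gaussKernel (hs : 0 < s) (x : ι → ℝ) : ∫ y, gaussKernel s x y = 1 := by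
  have htranslate := integral_sub_left_eq_self (fun v : ι → ℝ ↦ Real.exp (-s⁻¹ * ∑ i, v i ^ 2))
    volume x
  simp only [Pi.sub_apply] at htranslate
  simp only [gaussKernel]
  rw [integral_const_mul, htranslate, integral_exp_neg_mul_sum_sq (inv_pos.2 hs), div_inv_eq_mul,
    ← Real.rpow_add (by positivity), neg_div, neg_add_cancel, Real.rpow_zero]

lemma norm_fourierKernel (τ : ℝ) (x y : ι → ℝ) :
    ‖fourierKernel τ x y‖ = (Real.pi * |τ|) ^ (-(Fintype.card ι : ℝ) / 2) := by
  rw [fourierKernel, ← ofReal_neg, norm_mul, norm_exp_ofReal_mul_I, mul_one, norm_real,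
    Real.norm_of_nonneg (by positivity)]

lemma fourierKernel_mul_conj (τ : ℝ) (x y y' : ι → ℝ) :
    fourierKernel τ x y * conj (fourierKernel τ x y') =
      (((Real.pi * |τ|) ^ 2) ^ (-(Fintype.card ι : ℝ) / 2) : ℝ) *
        cexp (∑ i, ((-2 / τ * (y i - y' i) : ℝ) * I) * x i) := by
  rw [fourierKernel, fourierKernel, map_mul, ← exp_conj, map_mul, conj_I, conj_ofReal,
    mul_mul_mul_comm, ← exp_add, ← ofReal_mul, ← sq, Real.rpow_pow_comm (by positivity)]
  congr 2
  push_cast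
  simp only [map_neg, map_mul, map_div₀, map_sum, map_ofNat, conj_ofReal, Finset.mul_sum,
    Finset.sum_mul, ← Finset.sum_neg_distrib, ← Finset.sum_add_distrib]
  exact Finset.sum_congr rfl fun i _ ↦ by ring

lemma gramKernel_fourierKernel (hε : 0 < ε) (hτ : τ ≠ 0) (y y' : ι → ℝ) :
    gramKernel volume (fun x ↦ Real.exp (-ε * ∑ i, x i ^ 2)) (fourierKernel τ) y y' =
      gaussKernel (ε * τ ^ 2) y y' := by
  have hscale : ((Real.pi * |τ|) ^ 2) ^ (-(Fintype.card ι : ℝ) / 2) *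
      (Real.pi / ε) ^ ((Fintype.card ι : ℝ) / 2) =
        (Real.pi * (ε * τ ^ 2)) ^ (-(Fintype.card ι : ℝ) / 2) := by
    rw [neg_div, Real.rpow_neg_eq_inv_rpow, Real.rpow_neg_eq_inv_rpow,
      ← Real.mul_rpow (by positivity) (by positivity), mul_pow, sq_abs]
    congr 1
    field_simp
  have hexponent : (∑ i, ((-2 / τ * (y i - y' i) : ℝ) * I) ^ 2) / (4 * ε) =
      (-(ε * τ ^ 2)⁻¹ * ∑ i, (y i - y' i) ^ 2 : ℝ) := by
    push_cast
    simp only [mul_pow, I_sq, Finset.mul_sum, Finset.sum_div]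
    refine Finset.sum_congr rfl fun i _ ↦ ?_
    have : (ε : ℂ) ≠ 0 := by exact_mod_cast hε.ne'
    field_simp
    ring
  calc gramKernel volume (fun x ↦ Real.exp (-ε * ∑ i, x i ^ 2)) (fourierKernel τ) y y'
      = ∫ x : ι → ℝ, (((Real.pi * |τ|) ^ 2) ^ (-(Fintype.card ι : ℝ) / 2) : ℝ) *
          cexp (-(ε : ℂ) * ∑ i, (x i : ℂ) ^ 2 + ∑ i, ((-2 / τ * (y i - y' i) : ℝ) * I) * x i) := by
        rw [gramKernel]
        refine integral_congr_ae (ae_of_all _ fun x ↦ ?_)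
        simp only [fourierKernel_mul_conj]
        rw [mul_left_comm, ofReal_exp, ← exp_add]
        push_cast
        rfl
    _ = gaussKernel (ε * τ ^ 2) y y' := by
        rw [integral_const_mul, GaussianFourier.integral_cexp_neg_mul_sum_add (by simpa using hε),
          hexponent, gaussKernel, ← hscale]
        push_cast [ofReal_cpow (by positivity : 0 ≤ Real.pi / ε)]
        ring

lemma isSchurKernel_fourierKernel (hτ : τ ≠ 0) :
    IsSchurKernel (volume : Measure (ι → ℝ)) volume (fourierKernel τ)
      ((Real.pi * |τ|) ^ (-(Fintype.card ι : ℝ) / 2)) where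
  measurable := by
    unfold fourierKernel
    fun_prop
  norm_le x y := (norm_fourierKernel τ x y).le
  exists_cutoff := by
    refine ⟨fun n x ↦ Real.exp (-(1 / (n + 1)) * ∑ i, x i ^ 2), fun n ↦ ?_,
      fun x ↦ tendsto_exp_neg_one_div_add_one_mul (∑ i, x i ^ 2)⟩
    have hε : (0 : ℝ) < 1 / (n + 1) := by positivity
    have hint : Integrable fun x : ι → ℝ ↦ Real.exp (-(1 / (n + 1)) * ∑ i, x i ^ 2) := by
      refine .of_integral_ne_zero ?_
      rw [integral_exp_neg_mul_sum_sq hε]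
      positivity
    exact .of_gramKernel_eq hint (fun x ↦ by positivity) (gramKernel_fourierKernel hε hτ)
      (gaussKernel_nonneg (by positivity)) (integral_gaussKernel (by positivity))

end Fourier

section Schrodinger

variable {a t : ℝ} {d : ℕ}

/-- The quadratic phase `e ^ (i q / (4 t))` of the Schrödinger kernels. -/
def chirp (t q : ℝ) : ℂ := cexp (I * q / (4 * t : ℝ))

lemma chirp_eq (t q : ℝ) : chirp t q = cexp ((q / (4 * t) : ℝ) * I) := by
  rw [chirp]
  push_cast
  ring_nf

lemma norm_chirp (t q : ℝ) : ‖chirp t q‖ = 1 := by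
  rw [chirp_eq, norm_exp_ofReal_mul_I]

lemma continuous_chirp (t : ℝ) : Continuous (chirp t) := by
  unfold chirp
  fun_prop

lemma chirp_add (t p q : ℝ) : chirp t (p + q) = chirp t p * chirp t q := by
  simp only [chirp_eq, add_div, ofReal_add, add_mul, exp_add]

lemma Sfree_eq_mul_fourierKernel (ht : t ≠ 0) (x y : Fin d → ℝ) :
    Sfree d x y t = (4 * Real.pi * I * t) ^ (-(d : ℂ) / 2) /
      ‖(4 * Real.pi * I * t : ℂ) ^ (-(d : ℂ) / 2)‖ * chirp t (∑ i, x i ^ 2) *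
        chirp t (∑ i, y i ^ 2) * fourierKernel (4 * t) x y := by
  set c : ℂ := (4 * Real.pi * I * t) ^ (-(d : ℂ) / 2) with hc
  have hbase : (4 * Real.pi * I * t : ℂ) ≠ 0 := by simp [ht, Real.pi_ne_zero]
  have hnorm : (Real.pi * |4 * t|) ^ (-(Fintype.card (Fin d) : ℝ) / 2) = ‖c‖ := by
    have hexp : (-(d : ℂ) / 2) = (-(d : ℝ) / 2 : ℝ) := by push_cast; rfl
    rw [hc, hexp, norm_cpow_of_ne_zero hbase, ofReal_re, ofReal_im, Fintype.card_fin]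
    simp [abs_of_pos Real.pi_pos, abs_mul, mul_comm, mul_left_comm]
  have hc₀ : (‖c‖ : ℂ) ≠ 0 := by simp [hc, cpow_eq_zero_iff, hbase]
  have hsum : ∑ i, (x i - y i) ^ 2 = ∑ i, x i ^ 2 + ∑ i, y i ^ 2 - 2 * ∑ i, x i * y i := by
    rw [Finset.mul_sum, ← Finset.sum_add_distrib, ← Finset.sum_sub_distrib]
    exact Finset.sum_congr rfl fun i _ ↦ by ring
  have hphase : chirp t (∑ i, (x i - y i) ^ 2) = chirp t (∑ i, x i ^ 2) *
      chirp t (∑ i, y i ^ 2) * cexp (-(2 / (4 * t) * ∑ i, x i * y i : ℝ) * I) := by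
    rw [hsum, sub_eq_add_neg, chirp_add, chirp_add, chirp_eq t (-_)]
    push_cast
    ring_nf
  rw [Sfree, ← hc, ← chirp, hphase, fourierKernel, hnorm]
  field_simp

lemma isSchurKernel_Sfree (ht : t ≠ 0) :
    IsSchurKernel (volume : Measure (Fin d → ℝ)) volume (fun x y ↦ Sfree d x y t)
      ((Real.pi * |4 * t|) ^ (-(d : ℝ) / 2)) := by
  have hchirp := continuous_chirp t
  have hbase : (4 * Real.pi * I * t : ℂ) ^ (-(d : ℂ) / 2) ≠ 0 := by
    simp [cpow_eq_zero_iff, ht, Real.pi_ne_zero]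
  have hfourier := isSchurKernel_fourierKernel (ι := Fin d) (mul_ne_zero four_ne_zero ht)
  rw [Fintype.card_fin] at hfourier
  simp only [Sfree_eq_mul_fourierKernel ht]
  exact hfourier.unimodular_mul (by fun_prop) (by fun_prop)
    (fun x ↦ by simp [norm_chirp, hbase]) (fun y ↦ norm_chirp t _)

lemma besselJ_eq_rpow_mul_besselClifford {x : ℝ} (hx : 0 < x) (ν : ℝ) :
    besselJ ν x = (x / 2) ^ ν * besselClifford ν (-(x / 2) ^ 2) := by
  rw [besselJ, besselClifford, ← tsum_mul_left]
  refine tsum_congr fun k ↦ ?_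
  have hpow : (x / 2) ^ (2 * (k : ℝ) + ν) = ((x / 2) ^ 2) ^ k * (x / 2) ^ ν := by
    rw [Real.rpow_add (by positivity), Real.rpow_mul_natCast (by positivity), Real.rpow_two]
  rw [hpow, neg_pow ((x / 2) ^ 2), besselCliffordCoeff]
  ring

lemma rpow_neg_mul_div_two_rpow_div_rpow {x y : ℝ} (hx : 0 < x) (hy : 0 < y) (ν : ℝ) :
    x ^ (-ν) * (x / 2) ^ ν / y ^ (ν + 1) = 2 * (2 * y) ^ (-(ν + 1)) := by
  rw [Real.div_rpow hx.le zero_le_two, Real.rpow_neg hx.le, Real.rpow_neg (by positivity),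
    Real.mul_rpow zero_le_two hy.le, Real.rpow_add_one two_ne_zero]
  field_simp

lemma SaK_eq_mul_hankelKernel (ht : t ≠ 0) {z ζ : ℝ} (hz : 0 < z) (hζ : 0 < ζ) :
    SaK a z ζ t = cexp ((-Real.sign t * ((a + 1) * Real.pi / 4) : ℝ) * I) * chirp t (z ^ 2) *
      chirp t (ζ ^ 2) * hankelKernel ((a - 1) / 2) (4 * |t|) z ζ := by
  have ht₀ : 0 < |t| := abs_pos.2 ht
  have hs : 0 < z * ζ / (2 * |t|) := by positivity
  have hconst := rpow_neg_mul_div_two_rpow_div_rpow hs (mul_pos two_pos ht₀) ((a - 1) / 2)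
  rw [SaK, besselJ_eq_rpow_mul_besselClifford hs, ← chirp, chirp_add, hankelKernel,
    show 4 * |t| = 2 * (2 * |t|) by ring, ← hconst,
    show z * ζ / (2 * |t|) / 2 = z * ζ / (2 * (2 * |t|)) by field_simp,
    show (1 - a) / 2 = -((a - 1) / 2) by ring, show (a + 1) / 2 = (a - 1) / 2 + 1 by ring]
  push_cast
  ring_nf

lemma exists_isSchurKernel_SaK (ha : 0 ≤ a) (ht : t ≠ 0) :
    ∃ k : ℝ → ℝ → ℂ, IsSchurKernel (halfLineMeasure a) (halfLineMeasure a) k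
        (2 * (4 * |t|) ^ (-((a + 1) / 2)) * (1 / Real.Gamma ((a + 1) / 2))) ∧
      ∀ {z ζ : ℝ}, 0 < z → 0 < ζ → SaK a z ζ t = k z ζ := by
  have hchirp := continuous_chirp t
  have hτ : 0 < 4 * |t| := by positivity
  have hhankel := isSchurKernel_hankelKernel (ν := (a - 1) / 2) (by linarith) hτ
  rw [show 2 * ((a - 1) / 2) + 1 = a by ring, show (a - 1) / 2 + 1 = (a + 1) / 2 by ring]
    at hhankel
  exact ⟨_, hhankel.unimodular_mul (by fun_prop) (by fun_prop)
    (fun z ↦ by rw [norm_mul, norm_exp_ofReal_mul_I, norm_chirp, one_mul])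
    (fun ζ ↦ norm_chirp t _), SaK_eq_mul_hankelKernel ht⟩

lemma ωa_eq_prod (d : ℕ) (a : ℝ) : ωa d a = volume.prod (halfLineMeasure a) := rfl

instance : SFinite (ωa d a) := by
  rw [ωa_eq_prod]
  infer_instance

lemma ae_ωa_snd_pos (d : ℕ) (a : ℝ) : ∀ᵐ X ∂ωa d a, 0 < X.2 := by
  have hpos : ∀ᵐ z ∂halfLineMeasure a, 0 < z :=
    withDensity_absolutelyContinuous _ _ (ae_restrict_mem measurableSet_Ioi)
  exact Measure.quasiMeasurePreserving_snd.ae hpos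

lemma exists_isSchurKernel_SK (d : ℕ) (ha : 0 ≤ a) :
    ∃ C > (0 : ℝ), ∀ t : ℝ, t ≠ 0 → ∃ k : (Fin d → ℝ) × ℝ → (Fin d → ℝ) × ℝ → ℂ,
      IsSchurKernel (ωa d a) (ωa d a) k (C * |t| ^ (-((d + a + 1) / 2))) ∧
        ∀ {X Y}, 0 < X.2 → 0 < Y.2 → SK d a X Y t = k X Y := by
  have : 0 < Real.Gamma ((a + 1) / 2) := Real.Gamma_pos_of_pos (by linarith)
  refine ⟨(Real.pi * 4) ^ (-(d : ℝ) / 2) * (2 * 4 ^ (-((a + 1) / 2)) *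
    (1 / Real.Gamma ((a + 1) / 2))), by positivity, fun t ht ↦ ?_⟩
  obtain ⟨k, hk, hSaK⟩ := exists_isSchurKernel_SaK ha ht
  have ht₀ : 0 < |t| := abs_pos.2 ht
  have hbound : (Real.pi * |4 * t|) ^ (-(d : ℝ) / 2) *
      (2 * (4 * |t|) ^ (-((a + 1) / 2)) * (1 / Real.Gamma ((a + 1) / 2))) =
        (Real.pi * 4) ^ (-(d : ℝ) / 2) * (2 * 4 ^ (-((a + 1) / 2)) *
          (1 / Real.Gamma ((a + 1) / 2))) * |t| ^ (-((d + a + 1) / 2)) := by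
    rw [abs_mul, abs_of_pos four_pos, ← mul_assoc Real.pi, Real.mul_rpow (by positivity) ht₀.le,
      Real.mul_rpow zero_le_four ht₀.le,
      show -((d + a + 1) / 2) = -(d : ℝ) / 2 + -((a + 1) / 2) by ring, Real.rpow_add ht₀]
    ring
  refine ⟨_, hbound ▸ (isSchurKernel_Sfree ht).prod hk, fun {X Y} hX hY ↦ ?_⟩
  rw [SK, hSaK hX hY, mul_comm]

lemma ae_eq_kernelOperator_ωa {K k : (Fin d → ℝ) × ℝ → (Fin d → ℝ) × ℝ → ℂ}
    (hK : ∀ {X Y}, 0 < X.2 → 0 < Y.2 → K X Y = k X Y) (F : (Fin d → ℝ) × ℝ → ℂ) :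
    (fun X ↦ ∫ Y, K X Y * F Y ∂ωa d a) =ᵐ[ωa d a] kernelOperator (ωa d a) k F := by
  filter_upwards [ae_ωa_snd_pos d a] with X hX
  refine integral_congr_ae ?_
  filter_upwards [ae_ωa_snd_pos d a] with Y hY
  rw [hK hX hY]

lemma hasTemperateGrowth_halfLineMeasure (ha : 0 ≤ a) :
    (halfLineMeasure a).HasTemperateGrowth := by
  obtain ⟨n, hn⟩ := exists_nat_gt (a + 1)
  refine ⟨⟨n, ?_⟩⟩
  have hint : Integrable fun z : ℝ ↦ (1 + ‖z‖) ^ (-(n - a)) :=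
    integrable_one_add_norm (by simp; linarith)
  rw [halfLineMeasure, integrable_withDensity_iff (by fun_prop) (by simp)]
  refine hint.integrableOn.mono' (by fun_prop) (ae_restrict_of_forall_mem measurableSet_Ioi ?_)
  intro z (hz : 0 < z)
  rw [ENNReal.toReal_ofReal (by positivity), Real.norm_of_nonneg (by positivity),
    Real.norm_of_nonneg hz.le, neg_sub', sub_neg_eq_add, Real.rpow_add (by positivity)]
  gcongr
  linarith

lemma hasTemperateGrowth_prod {E F : Type*} [NormedAddCommGroup E] [MeasurableSpace E]
    [NormedAddCommGroup F] [MeasurableSpace F] [BorelSpace E] [BorelSpace F]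
    [SecondCountableTopology E] [SecondCountableTopology F] {μ : Measure E} {ν : Measure F}
    [SFinite ν] [hμ : μ.HasTemperateGrowth] [hν : ν.HasTemperateGrowth] :
    (μ.prod ν).HasTemperateGrowth := by
  obtain ⟨m, hm⟩ := hμ.exists_integrable
  obtain ⟨n, hn⟩ := hν.exists_integrable
  refine ⟨⟨m + n, (hm.mul_prod hn).mono' (Measurable.aestronglyMeasurable (by fun_prop))
    (ae_of_all _ fun X ↦ ?_)⟩⟩
  rw [Real.norm_of_nonneg (by positivity), Nat.cast_add, neg_add, Real.rpow_add (by positivity)]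
  gcongr ?_ * ?_
  · exact Real.rpow_le_rpow_of_nonpos (by positivity) (by gcongr; exact norm_fst_le X) (by simp)
  · exact Real.rpow_le_rpow_of_nonpos (by positivity) (by gcongr; exact norm_snd_le X) (by simp)

lemma integrable_schwartzMap_ωa (ha : 0 ≤ a) (F : SchwartzMap ((Fin d → ℝ) × ℝ) ℂ) :
    Integrable F (ωa d a) := by
  have := hasTemperateGrowth_halfLineMeasure ha
  have : (ωa d a).HasTemperateGrowth := hasTemperateGrowth_prod (ν := halfLineMeasure a)
  exact F.integrable

theorem dispersive_estimate_halfspace_general (d : ℕ) (ha : 0 ≤ a) {r r' : ℝ≥0∞} (hr : 2 ≤ r)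
    (hconj : 1 / r + 1 / r' = 1) :
    ∃ C > (0 : ℝ), ∀ t : ℝ, t ≠ 0 → ∀ F : (Fin d → ℝ) × ℝ → ℂ, Integrable F (ωa d a) →
      eLpNorm (fun X ↦ ∫ Y, SK d a X Y t * F Y ∂(ωa d a)) r (ωa d a) ≤
        ENNReal.ofReal (C * |t| ^ (-(((d : ℝ) + a + 1) * (1 / 2 - (1 / r).toReal)))) *
          eLpNorm F r' (ωa d a) := by
  obtain ⟨C₀, hC₀, hkernel⟩ := exists_isSchurKernel_SK d ha
  obtain ⟨C₁, hC₁, hinterpolation⟩ :=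
    exists_eLpNorm_le_of_isDispersiveOperator (μ := ωa d a) (ν := ωa d a) (E := ℂ) (F := ℂ) hr hconj
  refine ⟨C₁ * C₀ ^ (1 - 2 * (1 / r).toReal), by positivity, fun t ht F hF ↦ ?_⟩
  obtain ⟨k, hk, hSK⟩ := hkernel t ht
  have ht₀ : 0 < |t| := abs_pos.2 ht
  have hpow : (C₀ * |t| ^ (-((d + a + 1) / 2))) ^ (1 - 2 * (1 / r).toReal) =
      C₀ ^ (1 - 2 * (1 / r).toReal) *
        |t| ^ (-(((d : ℝ) + a + 1) * (1 / 2 - (1 / r).toReal))) := by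
    rw [Real.mul_rpow hC₀.le (by positivity), ← Real.rpow_mul ht₀.le]
    ring_nf
  rw [eLpNorm_congr_ae (ae_eq_kernelOperator_ωa hSK F), mul_assoc, ← hpow]
  exact hinterpolation (by positivity) hk.isDispersiveOperator hF

end Schrodinger

/-- Dispersive estimate for the half-space propagator, `a ≥ 0`,
`2 ≤ r ≤ ∞` (with `r'` the Hölder conjugate of `r`): for `t ≠ 0` and Schwartz `F`,
`‖𝕊_a(t)F‖_{L^r_a} ≤ C |t|^{-(d+a+1)(1/2 − 1/r)} ‖F‖_{L^{r'}_a}`. -/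
theorem dispersive_estimate_halfspace
    (d : ℕ) (hd : 1 ≤ d) (a : ℝ) (ha : 0 ≤ a) (r r' : ℝ≥0∞) (hr : 2 ≤ r)
    (hconj : 1 / r + 1 / r' = 1) :
    ∃ C > (0 : ℝ), ∀ t : ℝ, t ≠ 0 → ∀ F : SchwartzMap ((Fin d → ℝ) × ℝ) ℂ,
      eLpNorm (fun X => ∫ Y, SK d a X Y t * F Y ∂(ωa d a)) r (ωa d a)
        ≤ ENNReal.ofReal
            (C * |t| ^ (-(((d : ℝ) + a + 1) * (1 / 2 - (1 / r).toReal)))) *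
          eLpNorm (fun Y => F Y) r' (ωa d a) := by
  obtain ⟨C, hC, hdispersive⟩ := dispersive_estimate_halfspace_general d ha hr hconj
  exact ⟨C, hC, fun t ht F ↦ hdispersive t ht F (integrable_schwartzMap_ωa ha F)⟩

end
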